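/- Let n ≥ 2 be fixed and let (X_d)_{d≥1} be a unitarily invariant sequence of random positive semidefinite matrices X_d ∈ M_n(ℂ) ⊗ M_d(ℂ) converging strongly to a compactly supported probability measure μ with supp(μ) ⊆ [A,B] ⊆ [0,∞), mean m > 0 and variance σ². If B/m < 1 + n·σ²/m² − 2·(σ/m)·√(n−1), then almost surely, for all sufficiently large d, X_d ∉ SEP_{n,d}; in particular lim_{d→∞} P(X_d ∈ SEP_{n,d}) = 0. -/

import Mathlib

open MeasureTheory Filter Topology Polynomial Matrix Kronecker
open scoped ComplexOrder

noncomputable section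

/-- Measurable space structure on matrices (entrywise). -/
instance matMS (m n : Type*) : MeasurableSpace (Matrix m n ℂ) :=
  inferInstanceAs (MeasurableSpace (m → n → ℂ))

/-- The ℓ²→ℓ² operator norm of a complex square matrix. -/
def opNorm {N : Type*} [Fintype N] [DecidableEq N] (X : Matrix N N ℂ) : ℝ :=
  ‖Matrix.toEuclideanCLM (𝕜 := ℂ) (n := N) X‖

/-- Application of a real polynomial to a complex square matrix. -/
def polyApply {N : Type*} [Fintype N] [DecidableEq N] (P : Polynomial ℝ)
    (X : Matrix N N ℂ) : Matrix N N ℂ :=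
  Polynomial.aeval X (P.map (algebraMap ℝ ℂ))

/-- The (topological) support of a measure on ℝ: points all of whose open
neighbourhoods have positive measure. -/
def msupport (μ : Measure ℝ) : Set ℝ :=
  {x | ∀ U : Set ℝ, IsOpen U → x ∈ U → 0 < μ U}

/-- Strong convergence of a sequence of random matrices `X d ∈ M_n(ℂ) ⊗ M_d(ℂ)`
towards a compactly supported probability measure `μ`: almost surely, for every
real polynomial `P`, the normalized traces of `P(X d)` converge to `∫ P dμ` and the
operator norms of `P(X d)` converge to `sup {|P(x)| : x ∈ supp μ}`. -/
def StrongConv {Ω : Type*} [MeasurableSpace Ω] (ℙ : Measure Ω) (n : ℕ)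
    (X : (d : ℕ) → Ω → Matrix (Fin n × Fin d) (Fin n × Fin d) ℂ)
    (μ : Measure ℝ) : Prop :=
  ∀ᵐ ω ∂ℙ, ∀ P : Polynomial ℝ,
    Tendsto (fun d : ℕ => ((n : ℂ) * (d : ℂ))⁻¹ * (polyApply P (X d ω)).trace) atTop
      (𝓝 ((∫ x, P.eval x ∂μ : ℝ) : ℂ)) ∧
    Tendsto (fun d : ℕ => opNorm (polyApply P (X d ω))) atTop
      (𝓝 (sSup ((fun x => |P.eval x|) '' msupport μ)))

/-- Unitary invariance of a sequence of random matrices: for every `d` and every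
unitary `U`, the random matrix `U (X d) U*` has the same distribution as `X d`. -/
def UnitInv {Ω : Type*} [MeasurableSpace Ω] (ℙ : Measure Ω) (n : ℕ)
    (X : (d : ℕ) → Ω → Matrix (Fin n × Fin d) (Fin n × Fin d) ℂ) : Prop :=
  ∀ d : ℕ, ∀ U : Matrix (Fin n × Fin d) (Fin n × Fin d) ℂ,
    U ∈ unitary (Matrix (Fin n × Fin d) (Fin n × Fin d) ℂ) →
    Measure.map (fun ω => U * X d ω * star U) ℙ = Measure.map (X d) ℙ

/-- The separable cone `SEP_{n,d}`. -/
def SEP (n d : ℕ) : Set (Matrix (Fin n × Fin d) (Fin n × Fin d) ℂ) :=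
  {X | ∃ (k : ℕ) (A : Fin k → Matrix (Fin n) (Fin n) ℂ)
      (B : Fin k → Matrix (Fin d) (Fin d) ℂ),
    (∀ i, (A i).PosSemidef) ∧ (∀ i, (B i).PosSemidef) ∧ X = ∑ i, A i ⊗ₖ B i}

/-- The partial transpose on `M_n(ℂ) ⊗ M_d(ℂ)`: transposition of the first factor. -/
def ptrans {n d : ℕ} (X : Matrix (Fin n × Fin d) (Fin n × Fin d) ℂ) :
    Matrix (Fin n × Fin d) (Fin n × Fin d) ℂ :=
  fun p q => X (q.1, p.2) (p.1, q.2)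

/-- The PPT cone `PPT_{n,d}`: positive semidefinite matrices with positive
semidefinite partial transpose. -/
def PPT (n d : ℕ) : Set (Matrix (Fin n × Fin d) (Fin n × Fin d) ℂ) :=
  {X | X.PosSemidef ∧ (ptrans X).PosSemidef}

/-!
A separable `X` is controlled by its product vectors: if `h ‖a ⊗ v‖²` dominates
`⟨a ⊗ v, X (a ⊗ v)⟩` for all `a` and `v`, then `h - X` pairs nonnegatively with every separable
matrix, in particular with `X`, so `Tr X² ≤ h Tr X`. Since the normalised moments of `X_d` converge,
it is enough to find `c < m + σ² / m` such that, for each `a` in a finite net of the sphere of `ℂⁿ`,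
the compression of `X_d` to `a ⊗ ℂᵈ` almost surely has eventually no eigenvalue above `c`.

By unitary invariance that compression may be replaced by a random `d`-dimensional one, which is
built by removing one random direction at a time. A barrier above the spectrum, started at
`ζ = B + σ √(n - 1)`, moves down at every step by a fixed amount `δ` so small that the trace
`Φ` of the resolvent at the barrier does not grow on average. The trace of a high power of
the resolvent, multiplied by an exponential of `Φ` that absorbs the second-order terms, is almost a
supermartingale as well, and this keeps the spectrum away from the barrier. All `(n - 1) d` steps
succeed with a failure probability summable in `d`, and the bound of `Φ` at `ζ` through the first
two moments brings the barrier below `m + σ² / m` exactly under the hypothesis on `B / m`.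
-/

open scoped BigOperators

section RandomSigns

variable {M : ℕ}

lemma expect_signs_succ (f : (Fin (M + 1) → ℤˣ) → ℝ) :
    𝔼 s, f s = 𝔼 s : Fin M → ℤˣ, (f (Fin.cons 1 s) + f (Fin.cons (-1) s)) / 2 := by
  rw [← Fintype.expect_equiv (Fin.consEquiv fun _ : Fin (M + 1) => ℤˣ)
    (fun p => f (Fin.cons p.1 p.2)) f fun _ => rfl, ← Finset.univ_product_univ,
    Finset.expect_product' _ _ fun e s => f (Fin.cons e s), Finset.expect_comm]
  refine Finset.expect_congr rfl fun s _ => ?_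
  simp [Finset.expect_eq_sum_div_card, UnitsInt.univ]

lemma expect_mul_sq_le {ι : Type*} [Fintype ι] (f g : ι → ℝ) :
    (𝔼 i, f i * g i) ^ 2 ≤ (𝔼 i, f i ^ 2) * 𝔼 i, g i ^ 2 := by
  simp only [Fintype.expect_eq_sum_div_card, div_pow, div_mul_div_comm, ← sq]
  gcongr
  exact Finset.sum_mul_sq_le_sq_mul_sq _ _ _

lemma expect_pow_eight_add_sub_le {ι : Type*} [Fintype ι] {g h : ι → ℝ} {C G H : ℝ}
    (hC : 0 ≤ C) (hG : 0 ≤ G) (hH : 0 ≤ H) (hg : 𝔼 i, g i ^ 8 ≤ 7 ^ 4 * C * G ^ 4)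
    (hh : 𝔼 i, h i ^ 8 ≤ C * H ^ 4) :
    𝔼 i, ((g i + h i) ^ 8 + (g i - h i) ^ 8) / 2 ≤ 7 ^ 4 * C * (G + H) ^ 4 := by
  have expand : 𝔼 i, ((g i + h i) ^ 8 + (g i - h i) ^ 8) / 2
      = (𝔼 i, g i ^ 8) + 28 * (𝔼 i, g i ^ 4 * (g i ^ 2 * h i ^ 2))
        + 70 * (𝔼 i, g i ^ 4 * h i ^ 4) + 28 * (𝔼 i, h i ^ 4 * (g i ^ 2 * h i ^ 2))
        + 𝔼 i, h i ^ 8 := by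
    simp only [Finset.mul_expect, ← Finset.expect_add_distrib]
    exact Finset.expect_congr rfl fun i _ => by ring
  have cauchySchwarz {u v : ι → ℝ} {a b c : ℝ} (hb : 0 ≤ b) (hc : 0 ≤ c)
      (hu : 𝔼 i, u i ^ 2 ≤ a) (hv : 𝔼 i, v i ^ 2 ≤ b) (h : a * b = c ^ 2) :
      𝔼 i, u i * v i ≤ c :=
    le_of_sq_le_sq ((expect_mul_sq_le u v).trans <| h ▸ mul_le_mul hu hv
      (Finset.expect_nonneg fun i _ => sq_nonneg _)
      ((Finset.expect_nonneg fun i _ => sq_nonneg _).trans hu)) hc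
  have h44 : 𝔼 i, g i ^ 4 * h i ^ 4 ≤ 7 ^ 2 * C * (G ^ 2 * H ^ 2) :=
    cauchySchwarz (by positivity) (by positivity) (by simpa only [← pow_mul] using hg)
      (b := C * H ^ 4) (by simpa only [← pow_mul] using hh) (by ring)
  have h44' : 𝔼 i, (g i ^ 2 * h i ^ 2) ^ 2 ≤ 7 ^ 2 * C * (G ^ 2 * H ^ 2) := by
    simpa only [mul_pow, ← pow_mul] using h44
  have h62 : 𝔼 i, g i ^ 4 * (g i ^ 2 * h i ^ 2) ≤ 7 ^ 3 * C * (G ^ 3 * H) :=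
    cauchySchwarz (by positivity) (by positivity) (by simpa only [← pow_mul] using hg) h44'
      (by ring)
  have h26 : 𝔼 i, h i ^ 4 * (g i ^ 2 * h i ^ 2) ≤ 7 * C * (G * H ^ 3) :=
    cauchySchwarz (a := C * H ^ 4) (by positivity) (by positivity)
      (by simpa only [← pow_mul] using hh) h44'
      (by ring)
  have hexp : 7 ^ 4 * C * (G + H) ^ 4 = 7 ^ 4 * C * G ^ 4 + 28 * (7 ^ 3 * C * (G ^ 3 * H))
      + 6 * 7 ^ 4 * (C * (G ^ 2 * H ^ 2)) + 4 * 7 ^ 4 * (C * (G * H ^ 3))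
      + 7 ^ 4 * (C * H ^ 4) := by ring
  have p22 : 0 ≤ C * (G ^ 2 * H ^ 2) := by positivity
  have p13 : 0 ≤ C * (G * H ^ 3) := by positivity
  have p04 : 0 ≤ C * H ^ 4 := by positivity
  rw [expand, hexp]
  linarith

/-- The linear form of a real vector in signs. -/
def signSum (c : Fin M → ℝ) (s : Fin M → ℤˣ) : ℝ := ∑ i, ((s i : ℤ) : ℝ) * c i

/-- The off-diagonal part of the quadratic form of a real matrix in signs. -/
def signChaos (G : Matrix (Fin M) (Fin M) ℝ) (s : Fin M → ℤˣ) : ℝ :=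
  ∑ i, ∑ j, ((s i : ℤ) : ℝ) * ((s j : ℤ) : ℝ) * G i j - ∑ i, G i i

lemma signSum_cons (c : Fin (M + 1) → ℝ) (e : ℤˣ) (s : Fin M → ℤˣ) :
    signSum c (Fin.cons e s) = signSum (Fin.tail c) s + ((e : ℤ) : ℝ) * c 0 := by
  simp [signSum, Fin.sum_univ_succ, Fin.tail, add_comm]

lemma signChaos_cons (G : Matrix (Fin (M + 1)) (Fin (M + 1)) ℝ) (e : ℤˣ) (s : Fin M → ℤˣ) :
    signChaos G (Fin.cons e s) = signChaos (G.submatrix Fin.succ Fin.succ) s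
      + ((e : ℤ) : ℝ) * signSum (fun j => G 0 j.succ + G j.succ 0) s := by
  have he : ((e : ℤ) : ℝ) * ((e : ℤ) : ℝ) = 1 := by
    rw [← Int.cast_mul, ← Units.val_mul, Int.units_mul_self, Units.val_one, Int.cast_one]
  simp only [signChaos, signSum, Fin.sum_univ_succ, Fin.cons_zero, Fin.cons_succ,
    Matrix.submatrix_apply, Finset.sum_add_distrib, Finset.mul_sum, mul_add,
    mul_left_comm _ ((e : ℤ) : ℝ), mul_assoc]
  linear_combination G 0 0 * he

lemma expect_signSum_pow_eight_le (c : Fin M → ℝ) :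
    𝔼 s, signSum c s ^ 8 ≤ 7 ^ 4 * (∑ i, c i ^ 2) ^ 4 := by
  induction M with
  | zero => simp [signSum]
  | succ M ih =>
    have hstep := expect_pow_eight_add_sub_le (ι := Fin M → ℤˣ) (C := 1) (h := fun _ => c 0)
      (H := c 0 ^ 2) zero_le_one (Finset.sum_nonneg fun i _ => sq_nonneg (Fin.tail c i))
      (sq_nonneg _) (by simpa using ih (Fin.tail c))
      (by simp only [Fintype.expect_const]; ring_nf; rfl)
    simpa [expect_signs_succ, signSum_cons, ← sub_eq_add_neg, Fin.sum_univ_succ, Fin.tail,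
      add_comm (c 0 ^ 2)] using hstep

lemma expect_signChaos (G : Matrix (Fin M) (Fin M) ℝ) : 𝔼 s, signChaos G s = 0 := by
  induction M with
  | zero => simp [signChaos]
  | succ M ih =>
    rw [expect_signs_succ, ← ih (G.submatrix Fin.succ Fin.succ)]
    refine Finset.expect_congr rfl fun s _ => ?_
    simp only [signChaos_cons, Units.val_one, Int.cast_one, Units.val_neg, Int.cast_neg]
    ring

lemma expect_signChaos_pow_eight_le (G : Matrix (Fin M) (Fin M) ℝ) :
    𝔼 s, signChaos G s ^ 8 ≤ 7 ^ 8 * (2 * ∑ i, ∑ j, G i j ^ 2) ^ 4 := by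
  induction M with
  | zero => simp [signChaos]
  | succ M ih =>
    set G' := G.submatrix Fin.succ Fin.succ
    set c : Fin M → ℝ := fun j => G 0 j.succ + G j.succ 0
    have hstep := expect_pow_eight_add_sub_le (C := 7 ^ 4)
      (G := 2 * ∑ i, ∑ j, G' i j ^ 2) (H := ∑ j, c j ^ 2) (by positivity)
      (by positivity) (by positivity) ((ih G').trans_eq (by ring))
      (expect_signSum_pow_eight_le c)
    have hc : ∑ j, c j ^ 2 ≤ 2 * (∑ j : Fin M, G 0 j.succ ^ 2 + ∑ j : Fin M, G j.succ 0 ^ 2) := by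
      rw [← Finset.sum_add_distrib, Finset.mul_sum]
      refine Finset.sum_le_sum fun j _ => ?_
      linarith [add_pow_two (G 0 j.succ) (G j.succ 0), sq_nonneg (G 0 j.succ - G j.succ 0),
        sub_sq (G 0 j.succ) (G j.succ 0)]
    have hsum : 2 * ∑ i, ∑ j, G' i j ^ 2 + ∑ j, c j ^ 2 ≤ 2 * ∑ i, ∑ j, G i j ^ 2 := by
      simp only [Fin.sum_univ_succ, Finset.sum_add_distrib, G', Matrix.submatrix_apply]
      linarith [sq_nonneg (G 0 0)]
    calc 𝔼 s, signChaos G s ^ 8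
        = 𝔼 s, ((signChaos G' s + signSum c s) ^ 8 + (signChaos G' s - signSum c s) ^ 8) / 2 := by
          simp [expect_signs_succ, signChaos_cons, ← sub_eq_add_neg, G', c]
      _ ≤ 7 ^ 4 * 7 ^ 4 * (2 * ∑ i, ∑ j, G' i j ^ 2 + ∑ j, c j ^ 2) ^ 4 := hstep
      _ ≤ 7 ^ 8 * (2 * ∑ i, ∑ j, G i j ^ 2) ^ 4 := by
          rw [← pow_add]
          gcongr

end RandomSigns

section QuadraticForm

variable {ι κ : Type*} [Fintype ι] [Fintype κ]

/-- The real part of the quadratic form `v* H v`; it is the form itself when `H` is Hermitian. -/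
def quadRe (H : Matrix ι ι ℂ) (v : ι → ℂ) : ℝ := (star v ⬝ᵥ H *ᵥ v).re

lemma quadRe_sub (H K : Matrix ι ι ℂ) (v : ι → ℂ) :
    quadRe (H - K) v = quadRe H v - quadRe K v := by
  simp [quadRe, sub_mulVec]

lemma quadRe_nonneg {H : Matrix ι ι ℂ} (hH : H.PosSemidef) (v : ι → ℂ) : 0 ≤ quadRe H v :=
  (Complex.nonneg_iff.mp (hH.dotProduct_mulVec_nonneg v)).1

lemma quadRe_pos {A : Matrix ι ι ℂ} (hA : A.PosDef) {v : ι → ℂ} (hv : v ≠ 0) : 0 < quadRe A v :=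
  (Complex.pos_iff.mp (hA.dotProduct_mulVec_pos hv)).1

lemma quadRe_conjTranspose_mul_mul (H : Matrix ι ι ℂ) (J : Matrix ι κ ℂ) (v : κ → ℂ) :
    quadRe (Jᴴ * H * J) v = quadRe H (J *ᵥ v) := by
  simp [quadRe, star_mulVec, dotProduct_mulVec, ← mulVec_mulVec, vecMul_vecMul, Matrix.mul_assoc]

lemma coe_quadRe {H : Matrix ι ι ℂ} (hH : H.IsHermitian) (v : ι → ℂ) :
    (quadRe H v : ℂ) = star v ⬝ᵥ H *ᵥ v := by
  refine Complex.conj_eq_iff_re.mp ?_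
  rw [← RCLike.star_def, ← star_dotProduct_star, star_star, star_mulVec, hH.eq, dotProduct_mulVec,
    dotProduct_comm]

/-- The random unit vector with entries `± 1 / √k`. -/
def signVec {k : ℕ} (s : Fin k → ℤˣ) : Fin k → ℂ := fun i => (((s i : ℤ) / √k : ℝ) : ℂ)

lemma star_signVec_dotProduct_self {k : ℕ} (hk : k ≠ 0) (s : Fin k → ℤˣ) :
    star (signVec s) ⬝ᵥ signVec s = 1 := by
  have h : ∀ i, star (signVec s i) * signVec s i = (k : ℂ)⁻¹ := fun i => by
    have hi : ((s i : ℤ) : ℝ) * ((s i : ℤ) : ℝ) = 1 := by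
      rw [← Int.cast_mul, ← Units.val_mul, Int.units_mul_self, Units.val_one, Int.cast_one]
    rw [signVec, RCLike.star_def, Complex.conj_ofReal, ← Complex.ofReal_mul, div_mul_div_comm, hi,
      Real.mul_self_sqrt (Nat.cast_nonneg k)]
    simp
  simp only [dotProduct, Pi.star_apply, h]
  simp [hk]

lemma quadRe_signVec {k : ℕ} (H : Matrix (Fin k) (Fin k) ℂ) (s : Fin k → ℤˣ) :
    quadRe H (signVec s) = (H.trace.re + signChaos (H.map Complex.re) s) / k := by
  have h : ∀ i j, (star (signVec s i) * (H i j * signVec s j)).re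
      = ((s i : ℤ) : ℝ) * ((s j : ℤ) : ℝ) * (H i j).re / k := fun i j => by
    rw [signVec, signVec, RCLike.star_def, Complex.conj_ofReal, Complex.re_ofReal_mul,
      Complex.re_mul_ofReal, mul_div_assoc', div_mul_div_comm, Real.mul_self_sqrt k.cast_nonneg]
    ring
  simp only [quadRe, dotProduct, mulVec, Pi.star_apply, Complex.re_sum, Finset.mul_sum, h,
    signChaos, Matrix.trace, diag_apply, map_apply, ← Finset.sum_div]
  ring

lemma expect_quadRe_signVec {k : ℕ} (H : Matrix (Fin k) (Fin k) ℂ) :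
    𝔼 s, quadRe H (signVec s) = H.trace.re / k := by
  simp only [quadRe_signVec, ← Finset.expect_div, Finset.expect_add_distrib, expect_signChaos,
    Fintype.expect_const, add_zero]

lemma sum_re_sq_le_trace_sq {H : Matrix ι ι ℂ} [DecidableEq ι] (hH : H.IsHermitian) :
    ∑ i, ∑ j, (H i j).re ^ 2 ≤ (H ^ 2).trace.re := by
  simp only [sq H, Matrix.trace, diag_apply, Matrix.mul_apply, Complex.re_sum]
  refine Finset.sum_le_sum fun i _ => Finset.sum_le_sum fun j _ => ?_
  rw [← hH.apply j i, RCLike.star_def, Complex.mul_conj, Complex.ofReal_re, Complex.normSq_apply,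
    ← sq, ← sq]
  exact le_add_of_nonneg_right (sq_nonneg _)

lemma expect_quadRe_signVec_sub_pow_eight_le {k : ℕ} {H : Matrix (Fin k) (Fin k) ℂ}
    (hH : H.IsHermitian) :
    𝔼 s, (quadRe H (signVec s) - H.trace.re / k) ^ 8
      ≤ 7 ^ 8 * (2 * (H ^ 2).trace.re) ^ 4 / k ^ 8 := by
  simp only [quadRe_signVec, add_div, add_sub_cancel_left, div_pow, ← Finset.expect_div]
  gcongr
  refine (expect_signChaos_pow_eight_le _).trans ?_
  gcongr
  exact sum_re_sq_le_trace_sq hH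

end QuadraticForm

section SpectralCalculus

variable {ι : Type*} [Fintype ι] [DecidableEq ι]

/-- The functional calculus of the orthonormal eigenbasis formed by the columns of `U`: the algebra
homomorphism sending the eigenvalue assignment `f` to `U diag(f) U*`. -/
def conjDiag (U : unitaryGroup ι ℂ) : (ι → ℝ) →ₐ[ℝ] Matrix ι ι ℂ :=
  (((Unitary.conjStarAlgAut ℂ (Matrix ι ι ℂ) U).toAlgEquiv : Matrix ι ι ℂ →ₐ[ℂ] Matrix ι ι ℂ).comp
    (diagonalAlgHom ℂ)).restrictScalars ℝ |>.comp (Complex.ofRealAm.compLeft ι)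

lemma conjDiag_apply (U : unitaryGroup ι ℂ) (f : ι → ℝ) :
    conjDiag U f = U * diagonal (fun i => (f i : ℂ)) * (U : Matrix ι ι ℂ)ᴴ := rfl

lemma exists_eq_conjDiag {X : Matrix ι ι ℂ} (hX : X.IsHermitian) :
    ∃ (U : unitaryGroup ι ℂ) (f : ι → ℝ), X = conjDiag U f :=
  ⟨hX.eigenvectorUnitary, hX.eigenvalues, hX.spectral_theorem⟩

lemma algebraMap_sub_conjDiag (U : unitaryGroup ι ℂ) (z : ℝ) (f : ι → ℝ) :
    algebraMap ℝ (Matrix ι ι ℂ) z - conjDiag U f = conjDiag U fun i => z - f i := by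
  rw [← AlgHom.commutes (conjDiag U), ← map_sub]
  rfl

lemma trace_conjDiag_pow_re (U : unitaryGroup ι ℂ) (f : ι → ℝ) (q : ℕ) :
    (conjDiag U f ^ q).trace.re = ∑ i, f i ^ q := by
  rw [← map_pow, conjDiag_apply, Matrix.trace_mul_comm, ← Matrix.mul_assoc,
    ← star_eq_conjTranspose, UnitaryGroup.star_mul_self, Matrix.one_mul, trace_diagonal]
  simp only [Pi.pow_apply, Complex.re_sum, Complex.ofReal_re]

lemma quadRe_conjDiag (U : unitaryGroup ι ℂ) (f : ι → ℝ) (v : ι → ℂ) :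
    quadRe (conjDiag U f) v
      = ∑ i, f i * Complex.normSq (((U : Matrix ι ι ℂ)ᴴ *ᵥ v) i) := by
  have h := quadRe_conjTranspose_mul_mul (diagonal fun i => (f i : ℂ)) (U : Matrix ι ι ℂ)ᴴ v
  rw [conjTranspose_conjTranspose] at h
  rw [conjDiag_apply, h, quadRe]
  simp only [dotProduct, mulVec_diagonal, Complex.re_sum, Pi.star_apply, RCLike.star_def,
    Complex.normSq_apply]
  refine Finset.sum_congr rfl fun i _ => ?_
  simp
  ring

lemma sum_normSq_conjTranspose_mulVec (U : unitaryGroup ι ℂ) (v : ι → ℂ) :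
    ∑ i, Complex.normSq (((U : Matrix ι ι ℂ)ᴴ *ᵥ v) i) = (star v ⬝ᵥ v).re := by
  have h := quadRe_conjDiag U 1 v
  rw [map_one, quadRe, one_mulVec] at h
  simpa using h.symm

lemma posSemidef_conjDiag_iff (U : unitaryGroup ι ℂ) {f : ι → ℝ} :
    (conjDiag U f).PosSemidef ↔ ∀ i, 0 ≤ f i := by
  rw [conjDiag_apply, ← star_eq_conjTranspose,
    (Unitary.isUnit_coe (U := U)).posSemidef_star_right_conjugate_iff,
    posSemidef_diagonal_iff]
  simp

lemma posDef_conjDiag_iff (U : unitaryGroup ι ℂ) {f : ι → ℝ} :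
    (conjDiag U f).PosDef ↔ ∀ i, 0 < f i := by
  rw [conjDiag_apply, ← star_eq_conjTranspose,
    (Unitary.isUnit_coe (U := U)).posDef_star_right_conjugate_iff,
    posDef_diagonal_iff]
  simp

lemma resolvent_conjDiag (U : unitaryGroup ι ℂ) {f : ι → ℝ} {z : ℝ} (hf : ∀ i, f i < z) :
    resolvent (conjDiag U f) z = conjDiag U fun i => (z - f i)⁻¹ := by
  have h : (fun i => z - f i) * (fun i => (z - f i)⁻¹) = 1 :=
    funext fun i => mul_inv_cancel₀ (sub_pos.mpr (hf i)).ne'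
  have h' : conjDiag U (fun i => z - f i) * conjDiag U (fun i => (z - f i)⁻¹) = 1 := by
    rw [← map_mul, h, map_one]
  rw [resolvent, algebraMap_sub_conjDiag, ← nonsing_inv_eq_ringInverse]
  exact Matrix.inv_eq_right_inv h'

end SpectralCalculus

section RankOne

variable {ι : Type*} [Fintype ι]

lemma sum_mul_sum_le_of_monovary {w f g : ι → ℝ} (hw : ∀ i, 0 ≤ w i) (h : Monovary f g) :
    (∑ i, f i * w i) * ∑ i, g i * w i ≤ (∑ i, w i) * ∑ i, f i * g i * w i := by
  have hsq : 0 ≤ ∑ i, ∑ j, (f j - f i) * (g j - g i) * (w i * w j) :=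
    Finset.sum_nonneg fun i _ => Finset.sum_nonneg fun j _ =>
      mul_nonneg (monovary_iff_forall_mul_nonneg.mp h i j) (mul_nonneg (hw i) (hw j))
  have hexp : ∑ i, ∑ j, (f j - f i) * (g j - g i) * (w i * w j)
      = ((∑ i, w i) * ∑ j, f j * g j * w j - (∑ i, g i * w i) * ∑ j, f j * w j)
        + ((∑ i, f i * g i * w i) * ∑ j, w j - (∑ i, f i * w i) * ∑ j, g j * w j) := by
    simp only [Finset.sum_mul_sum, ← Finset.sum_sub_distrib, ← Finset.sum_add_distrib]
    exact Finset.sum_congr rfl fun i _ => Finset.sum_congr rfl fun j _ => by ring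
  linarith [mul_comm (∑ i, f i * w i) (∑ i, g i * w i),
    mul_comm (∑ i, w i) (∑ i, f i * g i * w i)]

variable [DecidableEq ι]

lemma quadRe_pow_mul_quadRe_pow_le {R : Matrix ι ι ℂ} (hR : R.PosSemidef) (y : ι → ℂ) (a b : ℕ) :
    quadRe (R ^ a) y * quadRe (R ^ b) y ≤ quadRe (R ^ 0) y * quadRe (R ^ (a + b)) y := by
  obtain ⟨U, r, rfl⟩ := exists_eq_conjDiag hR.1
  have hr := (posSemidef_conjDiag_iff U).mp hR
  have hmono : Monovary (r ^ a) (r ^ b) := fun i j hij =>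
    pow_le_pow_left₀ (hr i) (lt_of_pow_lt_pow_left₀ b (hr j) hij).le a
  simp only [← map_pow, quadRe_conjDiag]
  simpa [pow_add] using
    sum_mul_sum_le_of_monovary (fun i => Complex.normSq_nonneg _) hmono

variable {R S : Matrix ι ι ℂ} {y : ι → ℂ}

lemma quadRe_pow_succ_mul_pow (hS : S = R - vecMulVec y (star y)) (hR : R.IsHermitian) (m i : ℕ) :
    quadRe (S ^ (m + 1) * R ^ i) y
      = quadRe (S ^ m * R ^ (i + 1)) y - quadRe (S ^ m) y * quadRe (R ^ i) y := by
  have hrank : quadRe (S ^ m * vecMulVec y (star y) * R ^ i) y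
      = quadRe (S ^ m) y * quadRe (R ^ i) y := by
    rw [quadRe, Matrix.mul_assoc, ← mulVec_mulVec, ← mulVec_mulVec, vecMulVec_mulVec,
      ← coe_quadRe (hR.pow i)]
    simp [quadRe, mulVec_smul, dotProduct_smul, mul_comm]
  rw [← hrank, ← quadRe_sub, pow_succ, pow_succ', ← Matrix.mul_assoc, ← Matrix.sub_mul,
    ← Matrix.mul_sub, hS]

lemma quadRe_pow_mul_pow_bounds (hS : S = R - vecMulVec y (star y)) (hR : R.PosSemidef)
    (hSpos : S.PosSemidef) (m i : ℕ) :
    quadRe (S ^ m * R ^ i) y ≤ quadRe (R ^ (m + i)) y ∧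
      quadRe (R ^ (m + i)) y - m * (quadRe (R ^ 0) y * quadRe (R ^ (m + i - 1)) y)
        ≤ quadRe (S ^ m * R ^ i) y := by
  induction m generalizing i with
  | zero => simp
  | succ m ih =>
    have hSm : quadRe (S ^ m) y ≤ quadRe (R ^ m) y := by simpa using (ih 0).1
    have hmul : quadRe (S ^ m) y * quadRe (R ^ i) y
        ≤ quadRe (R ^ 0) y * quadRe (R ^ (m + i)) y :=
      (mul_le_mul_of_nonneg_right hSm (quadRe_nonneg (hR.pow i) y)).trans
        (quadRe_pow_mul_quadRe_pow_le hR y m i)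
    have hmul0 := mul_nonneg (quadRe_nonneg (hSpos.pow m) y) (quadRe_nonneg (hR.pow i) y)
    obtain ⟨hle, hge⟩ := ih (i + 1)
    rw [quadRe_pow_succ_mul_pow hS hR.1, add_right_comm m 1 i, add_tsub_cancel_right]
    rw [← add_assoc] at hle hge
    rw [add_tsub_cancel_right] at hge
    push_cast
    constructor <;> linarith

lemma trace_pow_mul_pow_sub (hS : S = R - vecMulVec y (star y)) (hR : R.IsHermitian)
    (hS' : S.IsHermitian) (m i : ℕ) :
    (S ^ m * R ^ (i + 1)).trace.re - (S ^ (m + 1) * R ^ i).trace.re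
      = quadRe (S ^ m * R ^ i) y := by
  have hRS : R - S = vecMulVec y (star y) := by rw [hS, sub_sub_cancel]
  rw [← Complex.sub_re, ← trace_sub, pow_succ' R, pow_succ S, Matrix.mul_assoc, ← Matrix.mul_sub,
    ← Matrix.sub_mul, hRS, ← Matrix.mul_assoc, Matrix.trace_mul_comm, ← Matrix.mul_assoc,
    mul_vecMulVec, trace_vecMulVec, ← Complex.conj_re, ← RCLike.star_def, ← star_dotProduct_star,
    star_star, star_mulVec, conjTranspose_mul, (hR.pow i).eq, (hS'.pow m).eq, quadRe,
    dotProduct_mulVec, dotProduct_comm]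

lemma trace_pow_le_of_eq_sub_vecMulVec (hS : S = R - vecMulVec y (star y)) (hR : R.PosSemidef)
    (hSpos : S.PosSemidef) (p : ℕ) :
    (S ^ p).trace.re ≤ (R ^ p).trace.re - p * quadRe (R ^ (p - 1)) y
      + p * (p - 1) / 2 * (quadRe (R ^ 0) y * quadRe (R ^ (p - 2)) y) := by
  have hmixed : ∀ q i : ℕ, (S ^ q * R ^ i).trace.re ≤ (R ^ (q + i)).trace.re
      - q * quadRe (R ^ (q + i - 1)) y
      + q * (q - 1) / 2 * (quadRe (R ^ 0) y * quadRe (R ^ (q + i - 2)) y) := by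
    intro q
    induction q with
    | zero => simp
    | succ q ih =>
      intro i
      have htrace := trace_pow_mul_pow_sub hS hR.1 hSpos.1 q i
      have hlower := (quadRe_pow_mul_pow_bounds hS hR hSpos q i).2
      have hprev := ih (i + 1)
      rw [← add_assoc, add_tsub_cancel_right, show q + i + 1 - 2 = q + i - 1 by omega] at hprev
      rw [add_right_comm q 1 i, add_tsub_cancel_right, show q + i + 1 - 2 = q + i - 1 by omega]
      push_cast
      linarith
  simpa using hmixed p 0

end RankOne

section Compression

variable {ι κ : Type*} [Fintype ι] [DecidableEq ι] [Fintype κ] [DecidableEq κ]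

/-- The compression `J* X J` of `X` along `J`, which is an isometry in all applications. -/
def compress (J : Matrix ι κ ℂ) (X : Matrix ι ι ℂ) : Matrix κ κ ℂ := Jᴴ * X * J

/-- `J` is an isometry onto the orthogonal complement of the unit vector `v`. -/
structure IsHyperplaneIsometry (J : Matrix ι κ ℂ) (v : ι → ℂ) : Prop where
  isometry : Jᴴ * J = 1
  dotProduct_self : star v ⬝ᵥ v = 1
  add_vecMulVec : J * Jᴴ + vecMulVec v (star v) = 1

/-- The trace of the `q`-th power of the resolvent of `X` at `z`. -/
def resolventTrace (X : Matrix ι ι ℂ) (z : ℝ) (q : ℕ) : ℝ := (resolvent X z ^ q).trace.re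

/-- The quadratic form at `v` of the `q`-th power of the resolvent of `X` at `z`. -/
def resolventForm (X : Matrix ι ι ℂ) (z : ℝ) (q : ℕ) (v : ι → ℂ) : ℝ := quadRe (resolvent X z ^ q) v

lemma resolvent_eq_inv (X : Matrix ι ι ℂ) (z : ℝ) :
    resolvent X z = (algebraMap ℝ (Matrix ι ι ℂ) z - X)⁻¹ := by
  rw [resolvent, nonsing_inv_eq_ringInverse]

lemma posDef_resolvent {X : Matrix ι ι ℂ} {z : ℝ}
    (hz : (algebraMap ℝ (Matrix ι ι ℂ) z - X).PosDef) : (resolvent X z).PosDef := by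
  rw [resolvent_eq_inv]; exact hz.inv

lemma resolventTrace_nonneg {X : Matrix ι ι ℂ} {z : ℝ}
    (hz : (algebraMap ℝ (Matrix ι ι ℂ) z - X).PosDef) (q : ℕ) : 0 ≤ resolventTrace X z q :=
  (Complex.nonneg_iff.mp ((posDef_resolvent hz).posSemidef.pow q).trace_nonneg).1

lemma algebraMap_sub_compress {J : Matrix ι κ ℂ} (hJ : Jᴴ * J = 1) (X : Matrix ι ι ℂ) (z : ℝ) :
    algebraMap ℝ (Matrix κ κ ℂ) z - compress J X
      = compress J (algebraMap ℝ (Matrix ι ι ℂ) z - X) := by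
  rw [compress, compress, Matrix.mul_sub, Matrix.sub_mul, Algebra.algebraMap_eq_smul_one,
    Algebra.algebraMap_eq_smul_one, Matrix.mul_smul, Matrix.smul_mul, Matrix.mul_one, hJ]

omit [DecidableEq ι] in
lemma injective_mulVec_of_isometry {J : Matrix ι κ ℂ} (hJ : Jᴴ * J = 1) :
    Function.Injective J.mulVec :=
  Function.LeftInverse.injective (g := Jᴴ.mulVec) fun v => by rw [mulVec_mulVec, hJ, one_mulVec]

lemma posDef_algebraMap_sub_compress {J : Matrix ι κ ℂ} (hJ : Jᴴ * J = 1) {X : Matrix ι ι ℂ} {z : ℝ}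
    (hz : (algebraMap ℝ (Matrix ι ι ℂ) z - X).PosDef) :
    (algebraMap ℝ (Matrix κ κ ℂ) z - compress J X).PosDef := by
  rw [algebraMap_sub_compress hJ]
  exact hz.conjTranspose_mul_mul_same (injective_mulVec_of_isometry hJ)

lemma trace_isometry_conj_pow {J : Matrix ι κ ℂ} (hJ : Jᴴ * J = 1) (Q : Matrix κ κ ℂ) {q : ℕ}
    (hq : q ≠ 0) : ((J * Q * Jᴴ) ^ q).trace = (Q ^ q).trace := by
  have hpow : ∀ m, (J * Q * Jᴴ) ^ (m + 1) = J * Q ^ (m + 1) * Jᴴ := fun m => by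
    induction m with
    | zero => simp only [zero_add, pow_one]
    | succ m ih =>
      rw [pow_succ, ih, pow_succ Q (m + 1)]
      simp only [Matrix.mul_assoc]
      rw [← Matrix.mul_assoc Jᴴ J, hJ, Matrix.one_mul]
  obtain ⟨m, rfl⟩ := Nat.exists_eq_succ_of_ne_zero hq
  rw [Nat.succ_eq_add_one, hpow, Matrix.trace_mul_comm, ← Matrix.mul_assoc, hJ, Matrix.one_mul]

/-- The vector `y` such that compressing to the orthogonal complement of `v` turns a resolvent `R`
into the rank-one downdate `R - y y*`. -/
def downdateVec (R : Matrix ι ι ℂ) (v : ι → ℂ) : ι → ℂ := ((√(quadRe R v))⁻¹ : ℝ) • R *ᵥ v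

section Downdate

variable {R : Matrix ι ι ℂ} {v : ι → ℂ}

omit [DecidableEq ι] in
lemma vecMulVec_downdateVec (hR : 0 ≤ quadRe R v) :
    vecMulVec (downdateVec R v) (star (downdateVec R v))
      = (quadRe R v)⁻¹ • vecMulVec (R *ᵥ v) (star (R *ᵥ v)) := by
  rw [downdateVec, star_smul, smul_vecMulVec, vecMulVec_smul, smul_smul, star_trivial,
    ← mul_inv, Real.mul_self_sqrt hR]

lemma quadRe_pow_downdateVec (hR : R.PosSemidef) (i : ℕ) :
    quadRe (R ^ i) (downdateVec R v) = quadRe (R ^ (i + 2)) v / quadRe R v := by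
  have hconj : quadRe (R ^ i) (R *ᵥ v) = quadRe (R ^ (i + 2)) v := by
    rw [← quadRe_conjTranspose_mul_mul, hR.1.eq, ← pow_succ', ← pow_succ]
  have hsmul : ∀ t : ℝ, quadRe (R ^ i) (t • R *ᵥ v) = t * t * quadRe (R ^ i) (R *ᵥ v) := fun t => by
    simp [quadRe, mulVec_smul, mul_assoc]
  rw [downdateVec, hsmul, hconj, ← mul_inv, Real.mul_self_sqrt (quadRe_nonneg hR v), div_eq_inv_mul]

omit [DecidableEq ι] in
lemma sub_downdateVec_mulVec (hR : R.PosSemidef) (hv : 0 < quadRe R v) :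
    (R - vecMulVec (downdateVec R v) (star (downdateVec R v))) *ᵥ v = 0 := by
  have hRv : star (R *ᵥ v) ⬝ᵥ v = (quadRe R v : ℂ) := by
    rw [coe_quadRe hR.1, star_mulVec, hR.1.eq, dotProduct_mulVec]
  rw [vecMulVec_downdateVec hv.le, sub_mulVec, smul_mulVec, vecMulVec_mulVec, hRv,
    op_smul_eq_smul, Complex.coe_smul, inv_smul_smul₀ hv.ne', sub_self]

end Downdate

namespace IsHyperplaneIsometry

variable {J : Matrix ι κ ℂ} {v : ι → ℂ}

lemma conjTranspose_mulVec_eq_zero (h : IsHyperplaneIsometry J v) : Jᴴ *ᵥ v = 0 := by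
  refine injective_mulVec_of_isometry h.isometry ?_
  have hv := congrArg (· *ᵥ v) h.add_vecMulVec
  simpa [add_mulVec, vecMulVec_mulVec, h.dotProduct_self] using hv

lemma mul_conjTranspose_mul (h : IsHyperplaneIsometry J v) {S : Matrix ι ι ℂ}
    (hS : S.IsHermitian) (hSv : S *ᵥ v = 0) : J * Jᴴ * S = S := by
  have hvS : star v ᵥ* S = 0 := by
    rw [← hS.eq, ← star_mulVec, hSv, star_zero]
  rw [eq_sub_of_add_eq h.add_vecMulVec, Matrix.sub_mul, Matrix.one_mul, vecMulVec_mul, hvS,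
    vecMulVec_zero, sub_zero]

lemma ne_zero (h : IsHyperplaneIsometry J v) : v ≠ 0 := fun hv => by
  simpa [hv] using h.dotProduct_self

lemma inv_compress (h : IsHyperplaneIsometry J v) {A : Matrix ι ι ℂ} (hA : A.PosDef) :
    (compress J A)⁻¹
      = compress J (A⁻¹ - vecMulVec (downdateVec A⁻¹ v) (star (downdateVec A⁻¹ v))) := by
  have hv := quadRe_pos hA.inv h.ne_zero
  have hdet : A * A⁻¹ = 1 := Matrix.mul_nonsing_inv A ((isUnit_iff_isUnit_det A).mp hA.isUnit)
  set S := A⁻¹ - vecMulVec (downdateVec A⁻¹ v) (star (downdateVec A⁻¹ v)) with hSdef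
  have hS : S.IsHermitian := hA.inv.1.sub (posSemidef_vecMulVec_self_star _).1
  have hJA : Jᴴ * (A * S) = Jᴴ := by
    rw [hSdef, vecMulVec_downdateVec hv.le, Matrix.mul_sub, hdet, Matrix.mul_smul, mul_vecMulVec,
      mulVec_mulVec, hdet, one_mulVec, Matrix.mul_sub, Matrix.mul_smul, mul_vecMulVec,
      h.conjTranspose_mulVec_eq_zero, zero_vecMulVec, smul_zero, Matrix.mul_one, sub_zero]
  refine Matrix.inv_eq_right_inv ?_
  calc compress J A * compress J S
      = Jᴴ * (A * (J * Jᴴ * S)) * J := by simp only [compress, Matrix.mul_assoc]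
    _ = 1 := by
      rw [h.mul_conjTranspose_mul hS (sub_downdateVec_mulVec hA.inv.posSemidef hv), hJA,
        h.isometry]

lemma conj_inv_compress (h : IsHyperplaneIsometry J v) {A : Matrix ι ι ℂ} (hA : A.PosDef) :
    J * (compress J A)⁻¹ * Jᴴ
      = A⁻¹ - vecMulVec (downdateVec A⁻¹ v) (star (downdateVec A⁻¹ v)) := by
  have hv := quadRe_pos hA.inv h.ne_zero
  set S := A⁻¹ - vecMulVec (downdateVec A⁻¹ v) (star (downdateVec A⁻¹ v))
  have hS : S.IsHermitian := hA.inv.1.sub (posSemidef_vecMulVec_self_star _).1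
  have hPS : J * Jᴴ * S = S :=
    h.mul_conjTranspose_mul hS (sub_downdateVec_mulVec hA.inv.posSemidef hv)
  have hSP : S * (J * Jᴴ) = S := by
    simpa [hS.eq, Matrix.mul_assoc] using congrArg conjTranspose hPS
  calc J * (compress J A)⁻¹ * Jᴴ = J * Jᴴ * S * (J * Jᴴ) := by
        rw [h.inv_compress hA]
        simp only [compress, Matrix.mul_assoc, S]
    _ = S := by rw [hPS, hSP]

variable {X : Matrix ι ι ℂ} {z : ℝ}

lemma resolventTrace_compress (h : IsHyperplaneIsometry J v)
    (hz : (algebraMap ℝ (Matrix ι ι ℂ) z - X).PosDef) {q : ℕ} (hq : q ≠ 0) :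
    resolventTrace (compress J X) z q
      = ((resolvent X z - vecMulVec (downdateVec (resolvent X z) v)
          (star (downdateVec (resolvent X z) v))) ^ q).trace.re := by
  rw [resolventTrace, resolvent_eq_inv, resolvent_eq_inv, algebraMap_sub_compress h.isometry,
    ← trace_isometry_conj_pow h.isometry _ hq, h.conj_inv_compress hz]

lemma resolventTrace_compress_one (h : IsHyperplaneIsometry J v)
    (hz : (algebraMap ℝ (Matrix ι ι ℂ) z - X).PosDef) :
    resolventTrace (compress J X) z 1
      = resolventTrace X z 1 - resolventForm X z 2 v / resolventForm X z 1 v := by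
  have hR := (posDef_resolvent hz).posSemidef
  have hform := quadRe_pow_downdateVec (v := v) hR 0
  rw [pow_zero, quadRe, one_mulVec] at hform
  rw [h.resolventTrace_compress hz one_ne_zero, pow_one, trace_sub, Complex.sub_re,
    trace_vecMulVec, dotProduct_comm, hform]
  simp [resolventTrace, resolventForm]

lemma resolventTrace_compress_le (h : IsHyperplaneIsometry J v)
    (hz : (algebraMap ℝ (Matrix ι ι ℂ) z - X).PosDef) {p : ℕ} (hp : 2 ≤ p) :
    resolventTrace (compress J X) z p
      ≤ resolventTrace X z p - p * (resolventForm X z (p + 1) v / resolventForm X z 1 v)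
        + p * (p - 1) / 2 * (resolventForm X z 2 v / resolventForm X z 1 v
          * (resolventForm X z p v / resolventForm X z 1 v)) := by
  obtain ⟨m, rfl⟩ := Nat.exists_eq_add_of_le' hp
  have hR := (posDef_resolvent hz).posSemidef
  have hS : (resolvent X z - vecMulVec (downdateVec (resolvent X z) v)
      (star (downdateVec (resolvent X z) v))).PosSemidef := by
    rw [resolvent_eq_inv, ← h.conj_inv_compress hz, ← algebraMap_sub_compress h.isometry]
    exact (posDef_algebraMap_sub_compress h.isometry hz).inv.posSemidef.mul_mul_conjTranspose_same J
  have hbound := trace_pow_le_of_eq_sub_vecMulVec rfl hR hS (m + 2)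
  rw [← h.resolventTrace_compress hz (by omega), show m + 2 - 1 = m + 1 from rfl,
    Nat.add_sub_cancel, quadRe_pow_downdateVec hR, quadRe_pow_downdateVec hR,
    quadRe_pow_downdateVec hR] at hbound
  simpa only [resolventTrace, resolventForm, pow_one, zero_add] using hbound

end IsHyperplaneIsometry

end Compression

section ScalarEstimates

variable {u δ : ℝ}

lemma inv_sub_pow_le (hu : 2 * δ ≤ u) (hu0 : 0 < u) (q : ℕ) :
    (u - δ)⁻¹ ^ q ≤ u⁻¹ ^ q + q * δ * (u - δ)⁻¹ ^ (q + 1) := by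
  have hud : 0 < u - δ := by linarith
  have hle : δ * (u - δ)⁻¹ ≤ 1 := by rw [← div_eq_mul_inv, div_le_one hud]; linarith
  have hinv : u⁻¹ ≥ (u - δ)⁻¹ * (1 + -(δ * (u - δ)⁻¹)) := by
    have hmul : (u - δ) * (u - δ)⁻¹ = 1 := mul_inv_cancel₀ hud.ne'
    rw [ge_iff_le, ← one_div u, le_div_iff₀ hu0]
    nlinarith [sq_nonneg (δ * (u - δ)⁻¹)]
  have hpow : (u - δ)⁻¹ ^ q * (1 + -(δ * (u - δ)⁻¹)) ^ q ≤ u⁻¹ ^ q := by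
    rw [← mul_pow]
    exact pow_le_pow_left₀ (mul_nonneg (by positivity) (by linarith)) hinv q
  have hbernoulli := mul_le_mul_of_nonneg_left
    (one_add_mul_le_pow (a := -(δ * (u - δ)⁻¹)) (by linarith) q)
    (pow_nonneg (inv_pos.mpr hud).le q)
  rw [pow_succ]
  linarith

lemma inv_sub_pow_le_two_mul {p : ℕ} (hu : 2 * (p * δ) ≤ u) (hδ : 0 ≤ δ) (hδu : δ < u) :
    (u - δ)⁻¹ ^ p ≤ 2 * u⁻¹ ^ p := by
  have hu0 : 0 < u := hδ.trans_lt hδu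
  have hbernoulli := one_add_mul_le_pow (a := -(δ / u))
    (by linarith [(div_le_one hu0).mpr hδu.le]) p
  have hhalf : p * (δ / u) ≤ 1 / 2 := by
    rw [← mul_div_assoc, div_le_iff₀ hu0]; linarith
  have hfac : (u - δ) ^ p = u ^ p * (1 + -(δ / u)) ^ p := by
    rw [← mul_pow, mul_add, mul_one, mul_neg, mul_div_cancel₀ _ hu0.ne', ← sub_eq_add_neg]
  have hud : 0 < (u - δ) ^ p := pow_pos (sub_pos.mpr hδu) p
  rw [inv_pow, inv_pow, ← div_eq_mul_inv, ← one_div, div_le_div_iff₀ hud (by positivity), one_mul,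
    hfac]
  nlinarith [pow_pos hu0 p]

lemma inv_sub_le_one_add_mul {ε : ℝ} (hu : (1 + ε) * δ ≤ ε * u) (hu0 : 0 < u) (hδu : δ < u) :
    (u - δ)⁻¹ ≤ (1 + ε) * u⁻¹ := by
  rw [← div_eq_mul_inv, ← one_div, div_le_div_iff₀ (sub_pos.mpr hδu) hu0]
  linarith

end ScalarEstimates

section SpectralGap

variable {ι : Type*} [Fintype ι] [DecidableEq ι] {X : Matrix ι ι ℂ} {z η : ℝ}

lemma algebraMap_sub_eq_add (X : Matrix ι ι ℂ) (z z' : ℝ) :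
    algebraMap ℝ (Matrix ι ι ℂ) z' - X
      = algebraMap ℝ (Matrix ι ι ℂ) z - X + algebraMap ℝ (Matrix ι ι ℂ) (z' - z) := by
  rw [map_sub]; abel

lemma posSemidef_algebraMap {t : ℝ} (ht : 0 ≤ t) :
    (algebraMap ℝ (Matrix ι ι ℂ) t).PosSemidef := by
  rw [Algebra.algebraMap_eq_smul_one]; exact PosSemidef.one.smul ht

lemma posDef_algebraMap {t : ℝ} (ht : 0 < t) : (algebraMap ℝ (Matrix ι ι ℂ) t).PosDef := by
  rw [Algebra.algebraMap_eq_smul_one]; exact PosDef.one.smul ht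

lemma posSemidef_algebraMap_sub_mono {z' : ℝ} (hz : (algebraMap ℝ (Matrix ι ι ℂ) z - X).PosSemidef)
    (h : z ≤ z') : (algebraMap ℝ (Matrix ι ι ℂ) z' - X).PosSemidef := by
  rw [algebraMap_sub_eq_add X z z']; exact hz.add (posSemidef_algebraMap (sub_nonneg.mpr h))

lemma posDef_algebraMap_sub_of_lt {z' : ℝ} (hz : (algebraMap ℝ (Matrix ι ι ℂ) z - X).PosSemidef)
    (h : z < z') : (algebraMap ℝ (Matrix ι ι ℂ) z' - X).PosDef := by
  rw [algebraMap_sub_eq_add X z z']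
  exact PosDef.posSemidef_add hz (posDef_algebraMap (sub_pos.mpr h))

lemma posSemidef_algebraMap_sub_conjDiag_iff (U : unitaryGroup ι ℂ) {f : ι → ℝ} :
    (algebraMap ℝ (Matrix ι ι ℂ) z - conjDiag U f).PosSemidef ↔ ∀ i, f i ≤ z := by
  simp only [algebraMap_sub_conjDiag, posSemidef_conjDiag_iff, sub_nonneg]

lemma posDef_algebraMap_sub_conjDiag_iff (U : unitaryGroup ι ℂ) {f : ι → ℝ} :
    (algebraMap ℝ (Matrix ι ι ℂ) z - conjDiag U f).PosDef ↔ ∀ i, f i < z := by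
  simp only [algebraMap_sub_conjDiag, posDef_conjDiag_iff, sub_pos]

lemma isHermitian_of_algebraMap_sub (hz : (algebraMap ℝ (Matrix ι ι ℂ) z - X).IsHermitian) :
    X.IsHermitian := by
  have hone : (algebraMap ℝ (Matrix ι ι ℂ) z).IsHermitian := by
    rw [Algebra.algebraMap_eq_smul_one]; exact isHermitian_one.smul (.all z)
  simpa using hone.sub hz

lemma resolventTrace_conjDiag (U : unitaryGroup ι ℂ) {f : ι → ℝ} (hf : ∀ i, f i < z) (q : ℕ) :
    resolventTrace (conjDiag U f) z q = ∑ i, (z - f i)⁻¹ ^ q := by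
  rw [resolventTrace, resolvent_conjDiag U hf, trace_conjDiag_pow_re]

lemma resolventForm_conjDiag (U : unitaryGroup ι ℂ) {f : ι → ℝ} (hf : ∀ i, f i < z) (q : ℕ)
    (v : ι → ℂ) : resolventForm (conjDiag U f) z q v
      = ∑ i, (z - f i)⁻¹ ^ q * Complex.normSq (((U : Matrix ι ι ℂ)ᴴ *ᵥ v) i) := by
  rw [resolventForm, resolvent_conjDiag U hf, ← map_pow, quadRe_conjDiag]; rfl

lemma resolventForm_nonneg (hz : (algebraMap ℝ (Matrix ι ι ℂ) z - X).PosDef) (q : ℕ) (v : ι → ℂ) :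
    0 ≤ resolventForm X z q v :=
  quadRe_nonneg ((posDef_resolvent hz).posSemidef.pow q) v

lemma resolventForm_one_pos (hz : (algebraMap ℝ (Matrix ι ι ℂ) z - X).PosDef) {v : ι → ℂ}
    (hv : v ≠ 0) : 0 < resolventForm X z 1 v := by
  rw [resolventForm, pow_one]; exact quadRe_pos (posDef_resolvent hz) hv

lemma card_le_pow_mul_resolventTrace (hX : X.PosSemidef)
    (hz : (algebraMap ℝ (Matrix ι ι ℂ) z - X).PosDef) {ζ : ℝ} (hζ : z ≤ ζ) (q : ℕ) :
    Fintype.card ι ≤ ζ ^ q * resolventTrace X z q := by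
  obtain ⟨U, f, rfl⟩ := exists_eq_conjDiag hX.1
  rw [posSemidef_conjDiag_iff] at hX
  rw [posDef_algebraMap_sub_conjDiag_iff] at hz
  rw [resolventTrace_conjDiag U hz, Finset.mul_sum, ← Finset.card_univ,
    Finset.cast_card]
  refine Finset.sum_le_sum fun i _ => ?_
  have hzf : 0 < z - f i := sub_pos.mpr (hz i)
  rw [← mul_pow, ← div_eq_mul_inv]
  exact one_le_pow₀ ((one_le_div hzf).mpr (by linarith [hX i]))

lemma resolventTrace_add_le (hη : 0 < η)
    (hz : (algebraMap ℝ (Matrix ι ι ℂ) (z - η) - X).PosSemidef) (q r : ℕ) :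
    resolventTrace X z (q + r) ≤ η⁻¹ ^ r * resolventTrace X z q := by
  obtain ⟨U, f, rfl⟩ := exists_eq_conjDiag (isHermitian_of_algebraMap_sub hz.1)
  rw [posSemidef_algebraMap_sub_conjDiag_iff] at hz
  have hf : ∀ i, η ≤ z - f i := fun i => le_sub_comm.mp (hz i)
  have hlt : ∀ i, f i < z := fun i => sub_pos.mp (hη.trans_le (hf i))
  rw [resolventTrace_conjDiag U hlt, resolventTrace_conjDiag U hlt, Finset.mul_sum]
  refine Finset.sum_le_sum fun i _ => ?_
  have hi := sub_pos.mpr (hlt i)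
  rw [pow_add, mul_comm]
  gcongr
  exact hf i

lemma resolventForm_le (hη : 0 < η)
    (hz : (algebraMap ℝ (Matrix ι ι ℂ) (z - η) - X).PosSemidef) (q : ℕ) {v : ι → ℂ}
    (hv : star v ⬝ᵥ v = 1) : resolventForm X z q v ≤ η⁻¹ ^ q := by
  obtain ⟨U, f, rfl⟩ := exists_eq_conjDiag (isHermitian_of_algebraMap_sub hz.1)
  rw [posSemidef_algebraMap_sub_conjDiag_iff] at hz
  have hf : ∀ i, η ≤ z - f i := fun i => le_sub_comm.mp (hz i)
  have hlt : ∀ i, f i < z := fun i => sub_pos.mp (hη.trans_le (hf i))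
  rw [resolventForm_conjDiag U hlt]
  calc ∑ i, (z - f i)⁻¹ ^ q * Complex.normSq (((U : Matrix ι ι ℂ)ᴴ *ᵥ v) i)
      ≤ ∑ i, η⁻¹ ^ q * Complex.normSq (((U : Matrix ι ι ℂ)ᴴ *ᵥ v) i) :=
        Finset.sum_le_sum fun i _ => by
          have hi := sub_pos.mpr (hlt i)
          gcongr
          exacts [Complex.normSq_nonneg _, hf i]
    _ = η⁻¹ ^ q := by
        rw [← Finset.mul_sum, sum_normSq_conjTranspose_mulVec, hv, Complex.one_re, mul_one]

lemma one_le_pow_mul_resolventTrace (hη : 0 < η)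
    (hz : (algebraMap ℝ (Matrix ι ι ℂ) z - X).PosDef)
    (hgap : ¬ (algebraMap ℝ (Matrix ι ι ℂ) (z - η) - X).PosSemidef) (q : ℕ) :
    1 ≤ η ^ q * resolventTrace X z q := by
  obtain ⟨U, f, rfl⟩ := exists_eq_conjDiag (isHermitian_of_algebraMap_sub hz.1)
  rw [posSemidef_algebraMap_sub_conjDiag_iff, not_forall] at hgap
  rw [posDef_algebraMap_sub_conjDiag_iff] at hz
  obtain ⟨i, hi⟩ := hgap
  rw [resolventTrace_conjDiag U hz, Finset.mul_sum]
  have hpos := fun j => sub_pos.mpr (hz j)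
  calc 1 ≤ η ^ q * (z - f i)⁻¹ ^ q := by
        rw [← mul_pow, ← div_eq_mul_inv]
        exact one_le_pow₀ ((one_le_div (hpos i)).mpr (by linarith))
    _ ≤ _ := Finset.single_le_sum (f := fun j => η ^ q * (z - f j)⁻¹ ^ q)
        (fun j _ => by have := hpos j; positivity) (Finset.mem_univ i)

variable {δ : ℝ}

lemma resolventTrace_sub_le (hδη : 2 * δ ≤ η) (hη : 0 < η)
    (hz : (algebraMap ℝ (Matrix ι ι ℂ) (z - η) - X).PosSemidef) (q : ℕ) :
    resolventTrace X (z - δ) q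
      ≤ resolventTrace X z q + q * δ * resolventTrace X (z - δ) (q + 1) := by
  obtain ⟨U, f, rfl⟩ := exists_eq_conjDiag (isHermitian_of_algebraMap_sub hz.1)
  rw [posSemidef_algebraMap_sub_conjDiag_iff] at hz
  have hlt : ∀ i, f i < z - δ := fun i => (hz i).trans_lt (by linarith)
  rw [resolventTrace_conjDiag U hlt, resolventTrace_conjDiag U hlt,
    resolventTrace_conjDiag U fun i => (hz i).trans_lt (by linarith), Finset.mul_sum,
    ← Finset.sum_add_distrib]
  refine Finset.sum_le_sum fun i _ => ?_
  rw [sub_right_comm]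
  exact inv_sub_pow_le (by linarith [hz i]) (by linarith [hz i]) q

lemma resolventTrace_sub_le_two_mul {p : ℕ} (hδ : 0 ≤ δ) (hδη : δ < η) (hpδ : 2 * (p * δ) ≤ η)
    (hz : (algebraMap ℝ (Matrix ι ι ℂ) (z - η) - X).PosSemidef) :
    resolventTrace X (z - δ) p ≤ 2 * resolventTrace X z p := by
  obtain ⟨U, f, rfl⟩ := exists_eq_conjDiag (isHermitian_of_algebraMap_sub hz.1)
  rw [posSemidef_algebraMap_sub_conjDiag_iff] at hz
  rw [resolventTrace_conjDiag U fun i => (hz i).trans_lt (by linarith),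
    resolventTrace_conjDiag U fun i => (hz i).trans_lt (by linarith), Finset.mul_sum]
  refine Finset.sum_le_sum fun i _ => ?_
  rw [sub_right_comm]
  exact inv_sub_pow_le_two_mul (by linarith [hz i]) hδ (by linarith [hz i])

lemma resolventTrace_sub_one_le {ε : ℝ} (hε : 0 ≤ ε) (hη : 0 < η) (hδη : δ < η)
    (hεδ : (1 + ε) * δ ≤ ε * η) (hz : (algebraMap ℝ (Matrix ι ι ℂ) (z - η) - X).PosSemidef) :
    resolventTrace X (z - δ) 1 ≤ (1 + ε) * resolventTrace X z 1 := by
  obtain ⟨U, f, rfl⟩ := exists_eq_conjDiag (isHermitian_of_algebraMap_sub hz.1)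
  rw [posSemidef_algebraMap_sub_conjDiag_iff] at hz
  rw [resolventTrace_conjDiag U fun i => (hz i).trans_lt (by linarith),
    resolventTrace_conjDiag U fun i => (hz i).trans_lt (by linarith), Finset.mul_sum]
  refine Finset.sum_le_sum fun i _ => ?_
  have hle : ε * η ≤ ε * (z - f i) := mul_le_mul_of_nonneg_left (by linarith [hz i]) hε
  rw [sub_right_comm, pow_one, pow_one]
  exact inv_sub_le_one_add_mul (by linarith) (by linarith [hz i]) (by linarith [hz i])

end SpectralGap

section Concentration

lemma indicator_le_div_pow_eight {α : Type*} (g : α → ℝ) {t : ℝ} (ht : 0 < t) (x : α) :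
    {x | t < |g x|}.indicator 1 x ≤ g x ^ 8 / t ^ 8 := by
  have heven : Even 8 := by decide
  refine Set.indicator_apply_le' (fun hx : t < |g x| => ?_) fun _ => ?_
  · rw [Pi.one_apply, one_le_div (by positivity), ← heven.pow_abs (g x)]
    gcongr
  · rw [← heven.pow_abs (g x)]; positivity

lemma expect_indicator_deviation_le {k : ℕ} {H : Matrix (Fin k) (Fin k) ℂ} (hH : H.PosSemidef)
    {ε D ζ ρ : ℝ} (hε : 0 < ε) (hD : 0 < D) (hζ : 0 < ζ) (hDζ : D ≤ ζ * H.trace.re)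
    (hρ : (H ^ 2).trace.re ≤ ρ * H.trace.re) :
    𝔼 s, {s | ε * (H.trace.re / k) < |quadRe H (signVec s) - H.trace.re / k|}.indicator 1 s
      ≤ 7 ^ 8 * 16 / ε ^ 8 * (ρ * ζ / D) ^ 4 := by
  have htr : 0 < H.trace.re := pos_of_mul_pos_right (hD.trans_le hDζ) hζ.le
  have hk : 0 < k := Nat.pos_of_ne_zero fun h => by
    subst h; simp [Matrix.trace] at htr
  have hsq : 0 ≤ (H ^ 2).trace.re := (Complex.nonneg_iff.mp (hH.pow 2).trace_nonneg).1
  have : (0 : ℝ) < k := Nat.cast_pos.mpr hk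
  calc 𝔼 s, {s | ε * (H.trace.re / k) < |quadRe H (signVec s) - H.trace.re / k|}.indicator 1 s
      ≤ 𝔼 s, (quadRe H (signVec s) - H.trace.re / k) ^ 8 / (ε * (H.trace.re / k)) ^ 8 :=
        Finset.expect_le_expect fun s _ => indicator_le_div_pow_eight _ (by positivity) s
    _ ≤ 7 ^ 8 * (2 * (H ^ 2).trace.re) ^ 4 / k ^ 8 / (ε * (H.trace.re / k)) ^ 8 := by
        rw [← Finset.expect_div]
        gcongr
        exact expect_quadRe_signVec_sub_pow_eight_le hH.1
    _ = 7 ^ 8 * 16 / ε ^ 8 * ((H ^ 2).trace.re / H.trace.re / H.trace.re) ^ 4 := by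
        field_simp; ring
    _ ≤ 7 ^ 8 * 16 / ε ^ 8 * (ρ * ζ / D) ^ 4 := by
        have h1 : (H ^ 2).trace.re / H.trace.re ≤ ρ := (div_le_iff₀ htr).mpr hρ
        have h0 : 0 ≤ (H ^ 2).trace.re / H.trace.re := by positivity
        have hρ0 : 0 ≤ ρ := h0.trans h1
        rw [mul_div_assoc ρ, div_eq_mul_inv (_ / _)]
        have h2 : H.trace.re⁻¹ ≤ ζ / D := by
          rw [← one_div, div_le_div_iff₀ htr hD, one_mul]; exact hDζ
        gcongr

end Concentration

/-- The parameters of the barrier argument: the exponent `p` of the potential, the relative slack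
`κ`, the bound `a` on the trace of the resolvent, the largest barrier `ζ`, the spectral gap `η`
below which the potential exceeds one, and the smallest dimension `D`. -/
structure Barrier where
  p : ℕ
  κ : ℝ
  a : ℝ
  ζ : ℝ
  η : ℝ
  D : ℝ
  two_le_p : 2 ≤ p
  κ_pos : 0 < κ
  κ_le_one : κ ≤ 1
  a_pos : 0 < a
  ζ_pos : 0 < ζ
  η_pos : 0 < η
  D_pos : 0 < D
  shift_le_slack : 16 * ((1 - κ) / a) ≤ κ * η
  shift_le_gap : 2 * (p * ((1 - κ) / a)) ≤ η

namespace Barrier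

variable (b : Barrier)

/-- The distance by which the barrier descends when the dimension drops by one. -/
def shift : ℝ := (1 - b.κ) / b.a

/-- The weight of the trace of the resolvent in the potential. It is chosen so that the decrease of
this trace pays for the second-order terms of the trace of the `p`-th power. -/
def rate : ℝ := 4 * b.p ^ 2 * b.a ^ 2 * b.ζ ^ 2 / (b.κ * b.D ^ 2)

/-- The potential of `X` for the barrier at `z`, which dominates the indicator of the event that
some eigenvalue of `X` lies within distance `η` of `z`. -/
def potential {ι : Type*} [Fintype ι] [DecidableEq ι] (X : Matrix ι ι ℂ) (z : ℝ) : ℝ :=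
  b.η ^ b.p * resolventTrace X z b.p * Real.exp (b.rate * resolventTrace X z 1 / b.a)

/-- A bound on the probability that the quadratic forms of the resolvent and of its square fail to
concentrate in one step. -/
def failureBound : ℝ :=
  7 ^ 8 * 16 / (b.κ / 8) ^ 8 * ((2 / b.η * b.ζ / b.D) ^ 4 + ((2 / b.η) ^ 2 * b.ζ ^ 2 / b.D) ^ 4)

/-- The amount by which the expected potential may grow in one step. -/
def loss : ℝ :=
  b.failureBound * (1 + Real.exp b.rate * (b.p * b.ζ * 2 ^ (b.p + 1) / b.η))

/-- The matrices and barriers to which one step of the barrier argument applies. -/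
structure Admissible {k : ℕ} (X : Matrix (Fin k) (Fin k) ℂ) (z : ℝ) : Prop where
  posSemidef : X.PosSemidef
  gap : (algebraMap ℝ (Matrix (Fin k) (Fin k) ℂ) (z - b.η) - X).PosSemidef
  le_ζ : z ≤ b.ζ
  resolventTrace_le : resolventTrace X z 1 ≤ b.a
  D_le : b.D ≤ k

/-- The event that the form of the `q`-th power of the resolvent at the lowered barrier is close to
its mean over all unit vectors. -/
def Concentrated {k : ℕ} (X : Matrix (Fin k) (Fin k) ℂ) (z : ℝ) (q : ℕ) (v : Fin k → ℂ) : Prop :=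
  |resolventForm X (z - b.shift) q v - resolventTrace X (z - b.shift) q / k|
    ≤ b.κ / 8 * (resolventTrace X (z - b.shift) q / k)

/-- An upper bound for the trace of the `p`-th power of the resolvent after one step that is affine
in the forms at the removed direction `v`, so that its expectation is explicit. -/
def affineBound {k : ℕ} (X : Matrix (Fin k) (Fin k) ℂ) (z : ℝ) (v : Fin k → ℂ) : ℝ :=
  resolventTrace X z b.p + b.p * b.shift * resolventTrace X (z - b.shift) (b.p + 1)
    - b.p * k / ((1 + b.κ / 8) * resolventTrace X (z - b.shift) 1)
      * resolventForm X (z - b.shift) (b.p + 1) v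
    + b.p ^ 2 * (resolventTrace X (z - b.shift) 2 * k / resolventTrace X (z - b.shift) 1 ^ 2)
      * resolventForm X (z - b.shift) b.p v

/-- The value of the exponential weight of the potential guaranteed after a concentrated step. -/
def stepWeight {k : ℕ} (X : Matrix (Fin k) (Fin k) ℂ) (z : ℝ) : ℝ :=
  b.η ^ b.p * Real.exp (b.rate * (resolventTrace X z 1
    - b.κ / 2 * (resolventTrace X (z - b.shift) 2 / b.a)) / b.a)

lemma shift_nonneg : 0 ≤ b.shift := div_nonneg (sub_nonneg.mpr b.κ_le_one) b.a_pos.le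

lemma rate_nonneg : 0 ≤ b.rate := by
  have := b.κ_pos; have := b.D_pos
  unfold rate; positivity

lemma failureBound_nonneg : 0 ≤ b.failureBound := by
  have := b.κ_pos; have := b.D_pos; have := b.ζ_pos; have := b.η_pos
  unfold failureBound; positivity

lemma loss_nonneg : 0 ≤ b.loss := by
  have := b.failureBound_nonneg; have := b.ζ_pos; have := b.η_pos
  unfold loss; positivity

lemma two_mul_shift_le : 2 * b.shift ≤ b.η := by
  have hp : (2 : ℝ) ≤ b.p := by exact_mod_cast b.two_le_p
  nlinarith [b.shift_le_gap, mul_le_mul_of_nonneg_right hp b.shift_nonneg, b.shift_nonneg,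
    show b.shift = (1 - b.κ) / b.a from rfl]

lemma shift_lt : b.shift < b.η := by linarith [b.two_mul_shift_le, b.η_pos]

lemma potential_nonneg {ι : Type*} [Fintype ι] [DecidableEq ι] {Y : Matrix ι ι ℂ} {z : ℝ}
    (hz : (algebraMap ℝ (Matrix ι ι ℂ) z - Y).PosDef) : 0 ≤ b.potential Y z := by
  have := b.η_pos
  have := resolventTrace_nonneg hz b.p
  unfold potential; positivity

variable {b} {k : ℕ} {X : Matrix (Fin k) (Fin k) ℂ} {z : ℝ} {v : Fin k → ℂ}

namespace Admissible

variable (h : b.Admissible X z)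
include h

lemma card_pos : (0 : ℝ) < k := b.D_pos.trans_le h.D_le

lemma gap_sub_shift :
    (algebraMap ℝ (Matrix (Fin k) (Fin k) ℂ) (z - b.shift - b.η / 2) - X).PosSemidef :=
  posSemidef_algebraMap_sub_mono h.gap (by linarith [b.two_mul_shift_le])

lemma posDef : (algebraMap ℝ (Matrix (Fin k) (Fin k) ℂ) z - X).PosDef :=
  posDef_algebraMap_sub_of_lt h.gap (by linarith [b.η_pos])

lemma posDef_sub_shift : (algebraMap ℝ (Matrix (Fin k) (Fin k) ℂ) (z - b.shift) - X).PosDef :=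
  posDef_algebraMap_sub_of_lt h.gap (by linarith [b.shift_lt])

lemma card_le_pow_mul (q : ℕ) : (k : ℝ) ≤ b.ζ ^ q * resolventTrace X (z - b.shift) q := by
  simpa using card_le_pow_mul_resolventTrace h.posSemidef h.posDef_sub_shift
    (by linarith [h.le_ζ, b.shift_nonneg] : z - b.shift ≤ b.ζ) q

lemma resolventTrace_pos (q : ℕ) : 0 < resolventTrace X (z - b.shift) q :=
  pos_of_mul_pos_right (h.card_pos.trans_le (h.card_le_pow_mul q)) (pow_pos b.ζ_pos q).le

lemma resolventTrace_add_le (q r : ℕ) : resolventTrace X (z - b.shift) (q + r)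
    ≤ (2 / b.η) ^ r * resolventTrace X (z - b.shift) q := by
  simpa using _root_.resolventTrace_add_le (half_pos b.η_pos) h.gap_sub_shift q r

lemma resolventForm_le (hv : star v ⬝ᵥ v = 1) (q : ℕ) :
    resolventForm X (z - b.shift) q v ≤ (2 / b.η) ^ q := by
  simpa using _root_.resolventForm_le (half_pos b.η_pos) h.gap_sub_shift q hv

lemma resolventTrace_shift_one_le :
    resolventTrace X (z - b.shift) 1 ≤ (1 + b.κ / 8) * b.a := by
  have hκ := b.κ_pos
  have hslack : (1 + b.κ / 8) * b.shift ≤ b.κ / 8 * b.η := by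
    nlinarith [b.shift_le_slack, b.κ_le_one, b.shift_nonneg,
      show b.shift = (1 - b.κ) / b.a from rfl]
  exact (resolventTrace_sub_one_le (by positivity) b.η_pos b.shift_lt hslack h.gap).trans
    (mul_le_mul_of_nonneg_left h.resolventTrace_le (by positivity))

lemma shift_le_one_div :
    b.shift ≤ 1 / ((1 + b.κ / 8) * resolventTrace X (z - b.shift) 1) := by
  have ha := b.a_pos
  have hκ := b.κ_pos
  have hκ1 : 0 ≤ 1 - b.κ := sub_nonneg.mpr b.κ_le_one
  have hT1 := h.resolventTrace_pos 1
  have hT1a := h.resolventTrace_shift_one_le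
  rw [shift, div_le_div_iff₀ ha (by positivity), one_mul]
  calc (1 - b.κ) * ((1 + b.κ / 8) * resolventTrace X (z - b.shift) 1)
      ≤ (1 - b.κ) * ((1 + b.κ / 8) * ((1 + b.κ / 8) * b.a)) := by gcongr
    _ = (1 - b.κ) * (1 + b.κ / 8) ^ 2 * b.a := by ring
    _ ≤ b.a := mul_le_of_le_one_left ha.le
      (by nlinarith [mul_pos hκ hκ, mul_pos (mul_pos hκ hκ) hκ])

lemma expect_indicator_not_concentrated_le (q : ℕ) :
    𝔼 s, {s | ¬ b.Concentrated X z q (signVec s)}.indicator 1 s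
      ≤ 7 ^ 8 * 16 / (b.κ / 8) ^ 8 * ((2 / b.η) ^ q * b.ζ ^ q / b.D) ^ 4 := by
  simp only [Concentrated, not_le]
  refine expect_indicator_deviation_le ((posDef_resolvent h.posDef_sub_shift).posSemidef.pow q)
    (by linarith [b.κ_pos]) b.D_pos (pow_pos b.ζ_pos q) (h.D_le.trans (h.card_le_pow_mul q)) ?_
  rw [← pow_mul, mul_two]
  exact h.resolventTrace_add_le q q

lemma expect_indicator_not_concentrated_one_two_le :
    𝔼 s, {s | ¬ (b.Concentrated X z 1 (signVec s) ∧ b.Concentrated X z 2 (signVec s))}.indicator 1 s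
      ≤ b.failureBound := by
  have h1 := h.expect_indicator_not_concentrated_le 1
  have h2 := h.expect_indicator_not_concentrated_le 2
  rw [pow_one, pow_one] at h1
  rw [failureBound, mul_add]
  refine le_trans ?_ (add_le_add h1 h2)
  rw [← Finset.expect_add_distrib]
  refine Finset.expect_le_expect fun s _ => ?_
  by_cases h1 : b.Concentrated X z 1 (signVec s) <;>
    by_cases h2 : b.Concentrated X z 2 (signVec s) <;> simp [h1, h2]

end Admissible

section Concentrated

lemma Concentrated.le {q : ℕ} (hc : b.Concentrated X z q v) :
    resolventForm X (z - b.shift) q v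
      ≤ (1 + b.κ / 8) * (resolventTrace X (z - b.shift) q / k) := by
  linarith [(abs_le.mp hc).2]

lemma Concentrated.ge {q : ℕ} (hc : b.Concentrated X z q v) :
    (1 - b.κ / 8) * (resolventTrace X (z - b.shift) q / k)
      ≤ resolventForm X (z - b.shift) q v := by
  linarith [(abs_le.mp hc).1]

variable (h : b.Admissible X z)
include h

lemma Concentrated.div_le_inv_resolventForm (h1 : b.Concentrated X z 1 v)
    (hF : 0 < resolventForm X (z - b.shift) 1 v) :
    k / ((1 + b.κ / 8) * resolventTrace X (z - b.shift) 1)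
      ≤ (resolventForm X (z - b.shift) 1 v)⁻¹ := by
  have hk := h.card_pos
  have hκ := b.κ_pos
  have hT1 := h.resolventTrace_pos 1
  rw [div_le_iff₀ (by positivity), inv_mul_eq_div, le_div_iff₀ hF]
  calc k * resolventForm X (z - b.shift) 1 v
      ≤ k * ((1 + b.κ / 8) * (resolventTrace X (z - b.shift) 1 / k)) := by gcongr; exact h1.le
    _ = (1 + b.κ / 8) * resolventTrace X (z - b.shift) 1 := by field_simp

lemma Concentrated.resolventForm_div_sq_le (h1 : b.Concentrated X z 1 v)
    (h2 : b.Concentrated X z 2 v) :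
    resolventForm X (z - b.shift) 2 v / resolventForm X (z - b.shift) 1 v ^ 2
      ≤ 2 * (resolventTrace X (z - b.shift) 2 * k / resolventTrace X (z - b.shift) 1 ^ 2) := by
  have hk := h.card_pos
  have hκ1 := b.κ_le_one
  have hT1 := h.resolventTrace_pos 1
  have hT2 := h.resolventTrace_pos 2
  have hlower := h1.ge
  have hupper := h2.le
  set T₁ := resolventTrace X (z - b.shift) 1
  set T₂ := resolventTrace X (z - b.shift) 2
  calc resolventForm X (z - b.shift) 2 v / resolventForm X (z - b.shift) 1 v ^ 2
      ≤ 9 / 8 * (T₂ / k) / (7 / 8 * (T₁ / k)) ^ 2 := by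
        gcongr
        · exact hupper.trans (by gcongr; linarith)
        · exact le_trans (by gcongr; linarith) hlower
    _ = 72 / 49 * (T₂ * k / T₁ ^ 2) := by field_simp; norm_num
    _ ≤ 2 * (T₂ * k / T₁ ^ 2) := by gcongr; norm_num

variable {κ : Type*} [Fintype κ] [DecidableEq κ] {J : Matrix (Fin k) κ ℂ}
  (hJ : IsHyperplaneIsometry J v) (h1 : b.Concentrated X z 1 v) (h2 : b.Concentrated X z 2 v)
include hJ h1 h2

lemma resolventTrace_compress_one_le_of_concentrated :
    resolventTrace (compress J X) (z - b.shift) 1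
      ≤ resolventTrace X z 1 - b.κ / 2 * (resolventTrace X (z - b.shift) 2 / b.a) := by
  rw [hJ.resolventTrace_compress_one h.posDef_sub_shift]
  have hk := h.card_pos
  have ha := b.a_pos
  have hκ := b.κ_pos
  have hκ1 := b.κ_le_one
  have hT2 := h.resolventTrace_pos 2
  have hT1 := h.resolventTrace_shift_one_le
  have hF1 := resolventForm_one_pos h.posDef_sub_shift hJ.ne_zero
  have hlower := h2.ge
  have hupper := h1.le
  have hstep := resolventTrace_sub_le b.two_mul_shift_le b.η_pos h.gap 1
  set T₁ := resolventTrace X (z - b.shift) 1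
  set T₂ := resolventTrace X (z - b.shift) 2
  have hratio : (1 - 3 * (b.κ / 8)) * (T₂ / b.a)
      ≤ resolventForm X (z - b.shift) 2 v / resolventForm X (z - b.shift) 1 v := by
    rw [le_div_iff₀ hF1]
    calc (1 - 3 * (b.κ / 8)) * (T₂ / b.a) * resolventForm X (z - b.shift) 1 v
        ≤ (1 - 3 * (b.κ / 8)) * (T₂ / b.a) * ((1 + b.κ / 8) * ((1 + b.κ / 8) * b.a / k)) := by
          have : 0 ≤ 1 - 3 * (b.κ / 8) := by linarith
          gcongr
          exact hupper.trans (by gcongr)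
      _ = (1 - 3 * (b.κ / 8)) * (1 + b.κ / 8) ^ 2 * (T₂ / k) := by field_simp
      _ ≤ (1 - b.κ / 8) * (T₂ / k) := by
          gcongr
          nlinarith [mul_pos hκ hκ, mul_pos (mul_pos hκ hκ) hκ]
      _ ≤ _ := hlower
  have hshift : b.shift * T₂ = (1 - b.κ) * (T₂ / b.a) := by rw [shift]; ring
  have hpos : 0 < b.κ * (T₂ / b.a) := by positivity
  rw [Nat.cast_one, one_mul] at hstep
  linarith

lemma resolventTrace_compress_le_of_concentrated :
    resolventTrace (compress J X) (z - b.shift) b.p ≤ b.affineBound X z v := by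
  have hF1 := resolventForm_one_pos h.posDef_sub_shift hJ.ne_zero
  have hF := resolventForm_nonneg h.posDef_sub_shift (v := v)
  have hinv := h1.div_le_inv_resolventForm h hF1
  have hratio := h1.resolventForm_div_sq_le h h2
  have hstep := resolventTrace_sub_le b.two_mul_shift_le b.η_pos h.gap b.p
  refine (hJ.resolventTrace_compress_le h.posDef_sub_shift b.two_le_p).trans ?_
  unfold affineBound
  set F := fun q => resolventForm X (z - b.shift) q v
  set T₁ := resolventTrace X (z - b.shift) 1
  set T₂ := resolventTrace X (z - b.shift) 2
  have hF2 : 0 ≤ F 2 := hF 2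
  have hFp : 0 ≤ F b.p := hF b.p
  have hFp1 : 0 ≤ F (b.p + 1) := hF (b.p + 1)
  have hfirst : b.p * k / ((1 + b.κ / 8) * T₁) * F (b.p + 1) ≤ b.p * (F (b.p + 1) / F 1) := by
    calc b.p * k / ((1 + b.κ / 8) * T₁) * F (b.p + 1)
        = b.p * F (b.p + 1) * (k / ((1 + b.κ / 8) * T₁)) := by ring
      _ ≤ b.p * F (b.p + 1) * (F 1)⁻¹ := by gcongr
      _ = b.p * (F (b.p + 1) / F 1) := by ring
  have hsecond : b.p * (b.p - 1) / 2 * (F 2 / F 1 * (F b.p / F 1))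
      ≤ b.p ^ 2 * (T₂ * k / T₁ ^ 2) * F b.p := by
    calc b.p * (b.p - 1) / 2 * (F 2 / F 1 * (F b.p / F 1))
        ≤ b.p * b.p / 2 * (F 2 / F 1 * (F b.p / F 1)) := by gcongr; linarith
      _ = b.p ^ 2 / 2 * (F 2 / F 1 ^ 2) * F b.p := by field_simp
      _ ≤ b.p ^ 2 / 2 * (2 * (T₂ * k / T₁ ^ 2)) * F b.p := by gcongr
      _ = b.p ^ 2 * (T₂ * k / T₁ ^ 2) * F b.p := by ring
  linarith

end Concentrated

section Step

variable (h : b.Admissible X z)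
include h

lemma expect_affineBound_le :
    𝔼 s, b.affineBound X z (signVec s) ≤ resolventTrace X z b.p
      * Real.exp (2 * b.p ^ 2 * b.ζ ^ 2 / k ^ 2 * resolventTrace X (z - b.shift) 2) := by
  have hk := h.card_pos
  have hκ := b.κ_pos
  have hmean : ∀ q, 𝔼 s, resolventForm X (z - b.shift) q (signVec s)
      = resolventTrace X (z - b.shift) q / k := fun q => expect_quadRe_signVec _
  have hTp := resolventTrace_sub_le_two_mul b.shift_nonneg b.shift_lt b.shift_le_gap h.gap
  have hT1 := h.resolventTrace_pos 1
  have hT1k := h.card_le_pow_mul 1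
  have hT2 := h.resolventTrace_pos 2
  have hTp0 := h.resolventTrace_pos b.p
  have hTp1 := h.resolventTrace_pos (b.p + 1)
  have := resolventTrace_nonneg h.posDef b.p
  simp only [affineBound, Finset.expect_add_distrib, Finset.expect_sub_distrib,
    ← Finset.mul_expect, hmean, Fintype.expect_const]
  set T := fun q => resolventTrace X (z - b.shift) q
  have hfirst : b.p * b.shift * T (b.p + 1)
      ≤ b.p * k / ((1 + b.κ / 8) * T 1) * (T (b.p + 1) / k) := by
    have hshift := h.shift_le_one_div
    calc b.p * b.shift * T (b.p + 1) ≤ b.p * (1 / ((1 + b.κ / 8) * T 1)) * T (b.p + 1) := by gcongr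
      _ = b.p * k / ((1 + b.κ / 8) * T 1) * (T (b.p + 1) / k) := by field_simp
  have hsecond : b.p ^ 2 * (T 2 * k / T 1 ^ 2) * (T b.p / k)
      ≤ resolventTrace X z b.p * (2 * b.p ^ 2 * b.ζ ^ 2 / k ^ 2 * T 2) := by
    have hinv : 1 / T 1 ≤ b.ζ / k := by
      rw [div_le_div_iff₀ hT1 hk, one_mul, ← pow_one b.ζ]
      exact hT1k
    calc b.p ^ 2 * (T 2 * k / T 1 ^ 2) * (T b.p / k)
        = b.p ^ 2 * T 2 * (1 / T 1) ^ 2 * T b.p := by field_simp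
      _ ≤ b.p ^ 2 * T 2 * (b.ζ / k) ^ 2 * (2 * resolventTrace X z b.p) := by gcongr
      _ = resolventTrace X z b.p * (2 * b.p ^ 2 * b.ζ ^ 2 / k ^ 2 * T 2) := by ring
  nlinarith [Real.add_one_le_exp (2 * b.p ^ 2 * b.ζ ^ 2 / k ^ 2 * T 2)]

lemma stepWeight_le : b.stepWeight X z ≤ b.η ^ b.p * Real.exp b.rate := by
  have ha := b.a_pos
  have hκ := b.κ_pos
  have hη := b.η_pos
  have hT2 := h.resolventTrace_pos 2
  rw [stepWeight, mul_div_assoc]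
  gcongr
  refine mul_le_of_le_one_right b.rate_nonneg ((div_le_one ha).mpr ?_)
  exact (sub_le_self _ (by positivity)).trans h.resolventTrace_le

lemma neg_le_affineBound (hv : star v ⬝ᵥ v = 1) :
    -(b.p * b.ζ * (2 / b.η) ^ (b.p + 1)) ≤ b.affineBound X z v := by
  have hκ := b.κ_pos
  have hζ := b.ζ_pos
  have hδ := b.shift_nonneg
  have hT1 := h.resolventTrace_pos 1
  have hT2 := h.resolventTrace_pos 2
  have hTp1 := h.resolventTrace_pos (b.p + 1)
  have hSp := resolventTrace_nonneg h.posDef b.p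
  have hF := resolventForm_nonneg h.posDef_sub_shift (v := v)
  have hFp := hF b.p
  have hcoef : b.p * k / ((1 + b.κ / 8) * resolventTrace X (z - b.shift) 1) ≤ b.p * b.ζ := by
    have hcard := h.card_le_pow_mul 1
    rw [pow_one] at hcard
    rw [div_le_iff₀ (by positivity), mul_assoc]
    gcongr
    nlinarith [mul_pos hκ (mul_pos hζ hT1)]
  have hneg := mul_le_mul hcoef (h.resolventForm_le hv (b.p + 1)) (hF _) (by positivity)
  have hpos₁ : 0 ≤ b.p * b.shift * resolventTrace X (z - b.shift) (b.p + 1) := by positivity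
  have hpos₂ : 0 ≤ b.p ^ 2 * (resolventTrace X (z - b.shift) 2 * k
    / resolventTrace X (z - b.shift) 1 ^ 2) * resolventForm X (z - b.shift) b.p v := by positivity
  unfold affineBound
  linarith

lemma neg_le_stepWeight_mul_affineBound (hv : star v ⬝ᵥ v = 1) :
    -(Real.exp b.rate * (b.p * b.ζ * 2 ^ (b.p + 1) / b.η))
      ≤ b.stepWeight X z * b.affineBound X z v := by
  have hζ := b.ζ_pos
  have hη := b.η_pos
  have hw : 0 ≤ b.stepWeight X z := by unfold stepWeight; positivity
  calc -(Real.exp b.rate * (b.p * b.ζ * 2 ^ (b.p + 1) / b.η))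
      = -(b.η ^ b.p * Real.exp b.rate * (b.p * b.ζ * (2 / b.η) ^ (b.p + 1))) := by
        rw [div_pow]; field_simp; ring
    _ ≤ -(b.stepWeight X z * (b.p * b.ζ * (2 / b.η) ^ (b.p + 1))) :=
        neg_le_neg (mul_le_mul_of_nonneg_right (stepWeight_le h) (by positivity))
    _ ≤ b.stepWeight X z * b.affineBound X z v := by
        rw [← mul_neg]; exact mul_le_mul_of_nonneg_left (neg_le_affineBound h hv) hw

lemma stepWeight_mul_expect_affineBound_le :
    b.stepWeight X z * 𝔼 s, b.affineBound X z (signVec s) ≤ b.potential X z := by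
  have ha := b.a_pos
  have hκ := b.κ_pos
  have hη := b.η_pos
  have hD := b.D_pos
  have hDk := h.D_le
  have hT2 := h.resolventTrace_pos 2
  have hSp := resolventTrace_nonneg h.posDef b.p
  have hw : 0 ≤ b.stepWeight X z := by unfold stepWeight; positivity
  have hexponent : 2 * b.p ^ 2 * b.ζ ^ 2 / k ^ 2 * resolventTrace X (z - b.shift) 2
      ≤ b.rate * (b.κ / 2 * (resolventTrace X (z - b.shift) 2 / b.a)) / b.a :=
    calc 2 * b.p ^ 2 * b.ζ ^ 2 / k ^ 2 * resolventTrace X (z - b.shift) 2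
        ≤ 2 * b.p ^ 2 * b.ζ ^ 2 / b.D ^ 2 * resolventTrace X (z - b.shift) 2 := by gcongr
      _ = b.rate * (b.κ / 2 * (resolventTrace X (z - b.shift) 2 / b.a)) / b.a := by
        rw [rate]; field_simp; ring
  refine (mul_le_mul_of_nonneg_left (expect_affineBound_le h) hw).trans ?_
  rw [stepWeight, potential, mul_mul_mul_comm, mul_comm (b.η ^ b.p), ← mul_assoc,
    mul_comm _ (b.η ^ b.p), mul_assoc (_ * _), ← Real.exp_add]
  gcongr
  rw [mul_sub, sub_div]
  linarith

lemma potential_compress_le_of_concentrated {κ : Type*} [Fintype κ] [DecidableEq κ]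
    {J : Matrix (Fin k) κ ℂ} (hJ : IsHyperplaneIsometry J v) (h1 : b.Concentrated X z 1 v)
    (h2 : b.Concentrated X z 2 v) :
    b.potential (compress J X) (z - b.shift) ≤ b.stepWeight X z * b.affineBound X z v := by
  have ha := b.a_pos
  have hη := b.η_pos
  have hrate := b.rate_nonneg
  have htrace := resolventTrace_compress_one_le_of_concentrated h hJ h1 h2
  have hpow := resolventTrace_compress_le_of_concentrated h hJ h1 h2
  have hnonneg := resolventTrace_nonneg
    (posDef_algebraMap_sub_compress hJ.isometry h.posDef_sub_shift) b.p
  rw [potential, stepWeight, mul_right_comm]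
  gcongr

end Step

lemma one_le_potential {ι : Type*} [Fintype ι] [DecidableEq ι] {Y : Matrix ι ι ℂ}
    (hz : (algebraMap ℝ (Matrix ι ι ℂ) z - Y).PosDef)
    (hgap : ¬ (algebraMap ℝ (Matrix ι ι ℂ) (z - b.η) - Y).PosSemidef) : 1 ≤ b.potential Y z := by
  have hexp : 1 ≤ Real.exp (b.rate * resolventTrace Y z 1 / b.a) :=
    Real.one_le_exp (div_nonneg (mul_nonneg b.rate_nonneg (resolventTrace_nonneg hz 1)) b.a_pos.le)
  exact one_le_mul_of_one_le_of_one_le (one_le_pow_mul_resolventTrace b.η_pos hz hgap b.p) hexp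

variable {κ : Type*} [Fintype κ] [DecidableEq κ] {W : (Fin k → ℤˣ) → Matrix (Fin k) κ ℂ}
  {f : (Fin k → ℤˣ) → ℝ} {c₀ : ℝ}

lemma expect_le_potential_add_of_admissible (h : b.Admissible X z)
    (hW : ∀ s, IsHyperplaneIsometry (W s) (signVec s)) (hc₀ : 0 ≤ c₀) (hf1 : ∀ s, f s ≤ 1)
    (hf : ∀ s, (algebraMap ℝ (Matrix κ κ ℂ) (z - b.shift) - compress (W s) X).PosDef →
      resolventTrace (compress (W s) X) (z - b.shift) 1 ≤ b.a →
      f s ≤ b.potential (compress (W s) X) (z - b.shift) + c₀) :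
    𝔼 s, f s ≤ b.potential X z + (c₀ + b.loss) := by
  set L := Real.exp b.rate * (b.p * b.ζ * 2 ^ (b.p + 1) / b.η)
  have hL0 : 0 ≤ L := by have := b.ζ_pos; have := b.η_pos; positivity
  set bad : Set (Fin k → ℤˣ) :=
    {s | ¬ (b.Concentrated X z 1 (signVec s) ∧ b.Concentrated X z 2 (signVec s))}
  have hpoint : ∀ s, f s ≤ b.stepWeight X z * b.affineBound X z (signVec s) + c₀
      + (1 + L) * bad.indicator 1 s := by
    intro s
    by_cases hs : b.Concentrated X z 1 (signVec s) ∧ b.Concentrated X z 2 (signVec s)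
    · have hpot := potential_compress_le_of_concentrated h (hW s) hs.1 hs.2
      have htrace := resolventTrace_compress_one_le_of_concentrated h (hW s) hs.1 hs.2
      have hdrop : 0 ≤ b.κ / 2 * (resolventTrace X (z - b.shift) 2 / b.a) := by
        have := b.κ_pos; have := b.a_pos; have := h.resolventTrace_pos 2
        positivity
      have hfs := hf s (posDef_algebraMap_sub_compress (hW s).isometry h.posDef_sub_shift)
        (by linarith [h.resolventTrace_le])
      rw [Set.indicator_of_notMem (not_not.mpr hs)]
      linarith
    · rw [Set.indicator_of_mem (show s ∈ bad from hs), Pi.one_apply]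
      linarith [hf1 s, neg_le_stepWeight_mul_affineBound h (hW s).dotProduct_self]
  calc 𝔼 s, f s ≤ 𝔼 s, (b.stepWeight X z * b.affineBound X z (signVec s) + c₀
        + (1 + L) * bad.indicator 1 s) := Finset.expect_le_expect fun s _ => hpoint s
    _ = b.stepWeight X z * 𝔼 s, b.affineBound X z (signVec s) + c₀
        + (1 + L) * 𝔼 s, bad.indicator 1 s := by
      simp only [Finset.expect_add_distrib, ← Finset.mul_expect, Fintype.expect_const]
    _ ≤ b.potential X z + c₀ + (1 + L) * b.failureBound := by
      gcongr
      exacts [stepWeight_mul_expect_affineBound_le h,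
        h.expect_indicator_not_concentrated_one_two_le]
    _ = b.potential X z + (c₀ + b.loss) := by rw [loss]; ring

theorem expect_le_potential_add (hX : X.PosSemidef)
    (hz : (algebraMap ℝ (Matrix (Fin k) (Fin k) ℂ) z - X).PosDef) (hzζ : z ≤ b.ζ)
    (htrace : resolventTrace X z 1 ≤ b.a) (hD : b.D ≤ k)
    (hW : ∀ s, IsHyperplaneIsometry (W s) (signVec s)) (hc₀ : 0 ≤ c₀) (hf1 : ∀ s, f s ≤ 1)
    (hf : ∀ s, (algebraMap ℝ (Matrix κ κ ℂ) (z - b.shift) - compress (W s) X).PosDef →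
      resolventTrace (compress (W s) X) (z - b.shift) 1 ≤ b.a →
      f s ≤ b.potential (compress (W s) X) (z - b.shift) + c₀) :
    𝔼 s, f s ≤ b.potential X z + (c₀ + b.loss) := by
  by_cases hgap : (algebraMap ℝ (Matrix (Fin k) (Fin k) ℂ) (z - b.η) - X).PosSemidef
  · exact expect_le_potential_add_of_admissible ⟨hX, hgap, hzζ, htrace, hD⟩ hW hc₀ hf1 hf
  · calc 𝔼 s, f s ≤ 1 := Finset.expect_le Finset.univ_nonempty fun s _ => hf1 s
      _ ≤ b.potential X z + (c₀ + b.loss) := by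
        linarith [one_le_potential (b := b) hz hgap, b.loss_nonneg]

end Barrier

section Isometries

variable {ι κ : Type*} [Fintype ι] [DecidableEq ι] [Fintype κ] [DecidableEq κ]

omit [Fintype κ] in
lemma exists_unitary_submatrix_eq {J : Matrix ι κ ℂ} (hJ : Jᴴ * J = 1) (f : κ ↪ ι) :
    ∃ U : unitaryGroup ι ℂ, (U : Matrix ι ι ℂ).submatrix id f = J := by
  set v : ι → EuclideanSpace ℂ ι :=
    Function.extend f (fun j => WithLp.toLp 2 (J.col j)) 0
  have hvf : ∀ j, v (f j) = WithLp.toLp 2 (J.col j) := f.injective.extend_apply _ _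
  have horth : Orthonormal ℂ ((Set.range f).domRestrict v) := by
    rw [orthonormal_iff_ite]
    rintro ⟨_, i, rfl⟩ ⟨_, j, rfl⟩
    have hij := congrFun (congrFun hJ i) j
    simp only [mul_apply, conjTranspose_apply, one_apply] at hij
    simpa [hvf, PiLp.inner_apply, mul_comm, Subtype.ext_iff, f.injective.eq_iff] using hij
  obtain ⟨b, hb⟩ := horth.exists_orthonormalBasis_extension_of_card_eq (by simp)
  refine ⟨⟨_, (EuclideanSpace.basisFun ι ℂ).toMatrix_orthonormalBasis_mem_unitary b⟩, ?_⟩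
  ext i j
  simp [Module.Basis.toMatrix_apply, hb _ (Set.mem_range_self j), hvf]

lemma exists_isHyperplaneIsometry {k : ℕ} {v : Fin (k + 1) → ℂ} (hv : star v ⬝ᵥ v = 1) :
    ∃ W : Matrix (Fin (k + 1)) (Fin k) ℂ, IsHyperplaneIsometry W v := by
  obtain ⟨U, hU⟩ := exists_unitary_submatrix_eq (J := replicateCol Unit v)
    (by ext; simpa [mul_apply, dotProduct] using hv)
    ⟨fun _ => Fin.last k, fun _ _ _ => Subsingleton.elim _ _⟩
  have hlast : ∀ i, (U : Matrix _ _ ℂ) i (Fin.last k) = v i := fun i =>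
    congrFun (congrFun hU i) ()
  refine ⟨(U : Matrix _ _ ℂ).submatrix id Fin.castSucc, ?_, hv, ?_⟩
  · rw [conjTranspose_submatrix, ← submatrix_mul _ _ _ _ _ Function.bijective_id,
      ← star_eq_conjTranspose, mem_unitaryGroup_iff'.mp U.2,
      submatrix_one _ (Fin.castSucc_injective k)]
  · rw [← mem_unitaryGroup_iff.mp U.2]
    ext i j
    simp [mul_apply, Fin.sum_univ_castSucc, vecMulVec_apply, hlast, star_eq_conjTranspose]

lemma exists_unitary_mul_eq {J K : Matrix ι κ ℂ} (hJ : Jᴴ * J = 1) (hK : Kᴴ * K = 1) :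
    ∃ U : unitaryGroup ι ℂ, (U : Matrix ι ι ℂ) * J = K := by
  have hcard : Fintype.card κ ≤ Fintype.card ι := by
    simpa using LinearMap.finrank_le_finrank_of_injective (f := J.mulVecLin)
      (injective_mulVec_of_isometry hJ)
  obtain ⟨f⟩ := Function.Embedding.nonempty_of_card_le hcard
  obtain ⟨U, rfl⟩ := exists_unitary_submatrix_eq hJ f
  obtain ⟨V, rfl⟩ := exists_unitary_submatrix_eq hK f
  refine ⟨V * U⁻¹, ?_⟩
  calc (↑(V * U⁻¹) : Matrix ι ι ℂ) * (U : Matrix ι ι ℂ).submatrix id f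
      = (↑(V * U⁻¹ * U) : Matrix ι ι ℂ).submatrix id f := rfl
    _ = (V : Matrix ι ι ℂ).submatrix id f := by rw [inv_mul_cancel_right]

omit [DecidableEq ι] [Fintype κ] [DecidableEq κ] in
lemma compress_mul {ν : Type*} [Fintype ν] (J : Matrix ι κ ℂ) (W : Matrix ν ι ℂ)
    (X : Matrix ν ν ℂ) :
    compress (W * J) X = compress J (compress W X) := by
  simp only [compress, conjTranspose_mul, Matrix.mul_assoc]

end Isometries

section Descent

variable {ι κ ν I : Type*} [Fintype ι] [Fintype κ] [DecidableEq κ] [Fintype ν]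
  [Fintype I]

/-- The Hermitian matrices with an eigenvalue above `c`, together with all matrices that are not
Hermitian. -/
def exceedSet (κ : Type*) [Fintype κ] [DecidableEq κ] (c : ℝ) : Set (Matrix κ κ ℂ) :=
  {X | ¬ (algebraMap ℝ (Matrix κ κ ℂ) c - X).PosSemidef}

/-- The fraction of the members of a finite family of maps along which the compression of `X` has
an eigenvalue above `c`. -/
def exceedFraction (c : ℝ) (J : I → Matrix ι κ ℂ) (X : Matrix ι ι ℂ) : ℝ :=
  𝔼 i, (exceedSet κ c).indicator 1 (compress (J i) X)

lemma exceedFraction_le_one [Nonempty I] (c : ℝ) (J : I → Matrix ι κ ℂ) (X : Matrix ι ι ℂ) :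
    exceedFraction c J X ≤ 1 :=
  Finset.expect_le Finset.univ_nonempty fun _ _ =>
    Set.indicator_apply_le' (fun _ => le_rfl) fun _ => zero_le_one

lemma exceedFraction_mul {I' : Type*} [Fintype I'] (c : ℝ) (W : I → Matrix ι ν ℂ)
    (J : I' → Matrix ν κ ℂ) (X : Matrix ι ι ℂ) :
    exceedFraction c (fun q : I × I' => W q.1 * J q.2) X
      = 𝔼 i, exceedFraction c J (compress (W i) X) := by
  simp only [exceedFraction, compress_mul, ← Finset.univ_product_univ, Finset.expect_product]

lemma Barrier.exists_family_exceedFraction_le (b : Barrier) {d : ℕ} (hd : b.D ≤ d) {c : ℝ} (j : ℕ)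
    (hj : c + j * b.shift ≤ b.ζ) :
    ∃ (I : Type) (_ : Fintype I) (_ : Nonempty I) (J : I → Matrix (Fin (d + j)) (Fin d) ℂ),
      (∀ i, (J i)ᴴ * J i = 1) ∧ ∀ X : Matrix (Fin (d + j)) (Fin (d + j)) ℂ, X.PosSemidef →
        (algebraMap ℝ _ (c + j * b.shift) - X).PosDef →
        resolventTrace X (c + j * b.shift) 1 ≤ b.a →
        exceedFraction c J X ≤ b.potential X (c + j * b.shift) + j * b.loss := by
  induction j with
  | zero =>
    refine ⟨Unit, inferInstance, inferInstance, fun _ => 1, fun _ => by simp, fun X _ hX _ => ?_⟩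
    simp only [Nat.cast_zero, zero_mul, add_zero] at hX ⊢
    have hfrac : exceedFraction c (fun _ : Unit => (1 : Matrix (Fin d) (Fin d) ℂ)) X = 0 := by
      simpa [exceedFraction, exceedSet, compress] using hX.posSemidef
    exact hfrac.trans_le (b.potential_nonneg hX)
  | succ j ih =>
    have hδ := b.shift_nonneg
    have hzδ : c + (j + 1 : ℕ) * b.shift - b.shift = c + j * b.shift := by push_cast; ring
    obtain ⟨I, _, _, J, hJ, hfrac⟩ := ih (by linarith)
    choose W hW using fun s : Fin (d + j + 1) → ℤˣ =>
      exists_isHyperplaneIsometry (star_signVec_dotProduct_self (Nat.succ_ne_zero _) s)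
    refine ⟨(Fin (d + j + 1) → ℤˣ) × I, inferInstance, inferInstance, fun q => W q.1 * J q.2,
      fun q => ?_, fun X hX hz htrace => ?_⟩
    · rw [conjTranspose_mul, Matrix.mul_assoc, ← Matrix.mul_assoc _ (W q.1), (hW _).isometry,
        Matrix.one_mul, hJ]
    · rw [exceedFraction_mul]
      refine (expect_le_potential_add hX hz hj htrace
        (hd.trans (by exact_mod_cast Nat.le_add_right d (j + 1))) hW
        (mul_nonneg j.cast_nonneg b.loss_nonneg) (fun s => exceedFraction_le_one c J _)
        fun s hzs hts => ?_).trans_eq (by push_cast; ring)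
      rw [hzδ] at hzs hts ⊢
      exact hfrac _ (hX.conjTranspose_mul_mul_same _) hzs hts

end Descent

section ResolventBounds

variable {ι : Type*} [Fintype ι] [DecidableEq ι] {X : Matrix ι ι ℂ} {β ζ : ℝ}

lemma resolventTrace_le (hβζ : β < ζ) (hβ : (algebraMap ℝ (Matrix ι ι ℂ) β - X).PosSemidef)
    (q : ℕ) : resolventTrace X ζ q ≤ (ζ - β)⁻¹ ^ q * Fintype.card ι := by
  have h := resolventTrace_add_le (X := X) (z := ζ) (sub_pos.mpr hβζ) (by rwa [sub_sub_cancel]) 0 q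
  rw [zero_add] at h
  simpa [resolventTrace] using h

lemma resolventTrace_one_le {m : ℝ} (hβζ : β < ζ) (hmζ : m < ζ)
    (hβ : (algebraMap ℝ (Matrix ι ι ℂ) β - X).PosSemidef) :
    resolventTrace X ζ 1 ≤ Fintype.card ι / (ζ - m)
      + (X.trace.re - Fintype.card ι * m) / (ζ - m) ^ 2
      + ((X * X).trace.re - 2 * m * X.trace.re + Fintype.card ι * m ^ 2)
        / ((ζ - m) ^ 2 * (ζ - β)) := by
  obtain ⟨U, f, rfl⟩ := exists_eq_conjDiag (isHermitian_of_algebraMap_sub hβ.1)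
  rw [posSemidef_algebraMap_sub_conjDiag_iff] at hβ
  have hlt : ∀ i, f i < ζ := fun i => (hβ i).trans_lt hβζ
  have htr := trace_conjDiag_pow_re U f 1
  have htr2 := trace_conjDiag_pow_re U f 2
  simp only [pow_one] at htr
  rw [sq] at htr2
  have hm : 0 < ζ - m := sub_pos.mpr hmζ
  have hpoint : ∀ i, (ζ - f i)⁻¹ ^ 1 ≤ 1 / (ζ - m) + (f i - m) / (ζ - m) ^ 2
      + (f i ^ 2 - 2 * m * f i + m ^ 2) / ((ζ - m) ^ 2 * (ζ - β)) := fun i => by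
    have hi : 0 < ζ - f i := sub_pos.mpr (hlt i)
    calc (ζ - f i)⁻¹ ^ 1 = 1 / (ζ - m) + (f i - m) / (ζ - m) ^ 2
          + (f i - m) ^ 2 / ((ζ - m) ^ 2 * (ζ - f i)) := by field_simp; ring
      _ ≤ 1 / (ζ - m) + (f i - m) / (ζ - m) ^ 2
          + (f i - m) ^ 2 / ((ζ - m) ^ 2 * (ζ - β)) := by
        have := hβ i
        have := sub_pos.mpr hβζ
        gcongr
      _ = _ := by ring
  rw [resolventTrace_conjDiag U hlt, htr, htr2]
  refine (Finset.sum_le_sum fun i _ => hpoint i).trans_eq ?_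
  rw [Finset.sum_add_distrib, Finset.sum_add_distrib, ← Finset.sum_div, ← Finset.sum_div,
    ← Finset.sum_div, Finset.sum_sub_distrib, Finset.sum_add_distrib, Finset.sum_sub_distrib,
    ← Finset.mul_sum]
  simp

end ResolventBounds

section Rate

/-- The constant `K` in the bound `K * η⁻¹ ^ 9 / D ^ 4` for the loss of a barrier with parameters
`p`, `κ`, `ζ` and rate `θ`. -/
def lossConst (p : ℕ) (κ ζ θ : ℝ) : ℝ :=
  7 ^ 8 * 16 / (κ / 8) ^ 8 * (2 ^ 4 * ζ ^ 4 + 2 ^ 8 * ζ ^ 8)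
    * (1 + Real.exp θ * (p * ζ * 2 ^ (p + 1)))

lemma lossConst_nonneg {p : ℕ} {κ ζ θ : ℝ} (hκ : 0 < κ) (hζ : 0 < ζ) : 0 ≤ lossConst p κ ζ θ := by
  unfold lossConst; positivity

namespace Barrier

variable (b : Barrier)

lemma potential_le {ι : Type*} [Fintype ι] [DecidableEq ι] {X : Matrix ι ι ℂ} {β z : ℝ}
    (hβz : β < z) (hβ : (algebraMap ℝ (Matrix ι ι ℂ) β - X).PosSemidef)
    (htr : resolventTrace X z 1 ≤ b.a) :
    b.potential X z ≤ b.η ^ b.p * ((z - β)⁻¹ ^ b.p * Fintype.card ι) * Real.exp b.rate := by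
  have hη := b.η_pos
  have hexp : b.rate * resolventTrace X z 1 / b.a ≤ b.rate := by
    rw [mul_div_assoc]
    exact mul_le_of_le_one_right b.rate_nonneg (div_le_one_of_le₀ htr b.a_pos.le)
  have hpow := resolventTrace_le hβz hβ b.p
  have : 0 ≤ (z - β)⁻¹ ^ b.p * (Fintype.card ι : ℝ) := by
    have := sub_pos.mpr hβz
    positivity
  unfold potential
  gcongr

lemma failureBound_le (hη : b.η ≤ 1) : b.failureBound
    ≤ 7 ^ 8 * 16 / (b.κ / 8) ^ 8 * (2 ^ 4 * b.ζ ^ 4 + 2 ^ 8 * b.ζ ^ 8) * (b.η⁻¹ ^ 8 / b.D ^ 4) := by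
  have hκ := b.κ_pos
  have hζ := b.ζ_pos
  have hD := b.D_pos
  have hη1 : 1 ≤ b.η⁻¹ := (one_le_inv₀ b.η_pos).mpr hη
  have hpow : b.η⁻¹ ^ 4 ≤ b.η⁻¹ ^ 8 := pow_le_pow_right₀ hη1 (by norm_num)
  calc b.failureBound = 7 ^ 8 * 16 / (b.κ / 8) ^ 8
        * ((2 ^ 4 * b.ζ ^ 4 * b.η⁻¹ ^ 4 + 2 ^ 8 * b.ζ ^ 8 * b.η⁻¹ ^ 8) / b.D ^ 4) := by
        unfold failureBound; ring
    _ ≤ 7 ^ 8 * 16 / (b.κ / 8) ^ 8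
        * ((2 ^ 4 * b.ζ ^ 4 * b.η⁻¹ ^ 8 + 2 ^ 8 * b.ζ ^ 8 * b.η⁻¹ ^ 8) / b.D ^ 4) := by gcongr
    _ = _ := by ring

lemma loss_le (hη : b.η ≤ 1) :
    b.loss ≤ lossConst b.p b.κ b.ζ b.rate * (b.η⁻¹ ^ 9 / b.D ^ 4) := by
  have hζ := b.ζ_pos
  have hη1 : 1 ≤ b.η⁻¹ := (one_le_inv₀ b.η_pos).mpr hη
  have hfactor : 1 + Real.exp b.rate * (b.p * b.ζ * 2 ^ (b.p + 1) / b.η)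
      ≤ (1 + Real.exp b.rate * (b.p * b.ζ * 2 ^ (b.p + 1))) * b.η⁻¹ := by
    rw [div_eq_mul_inv, add_mul, one_mul, mul_assoc (Real.exp _)]
    gcongr
  calc b.loss ≤ _ := mul_le_mul (b.failureBound_le hη) hfactor (by have := b.η_pos; positivity)
        (b.failureBound_nonneg.trans (b.failureBound_le hη))
    _ = _ := by unfold lossConst; ring

lemma potential_add_mul_loss_le {ι : Type*} [Fintype ι] [DecidableEq ι] {X : Matrix ι ι ℂ}
    {β z N j : ℝ} (hp : b.p = 24) (hηD : b.η ^ 8 * b.D = 1) (hη : b.η ≤ 1) (hβz : β < z)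
    (hβ : (algebraMap ℝ (Matrix ι ι ℂ) β - X).PosSemidef) (htr : resolventTrace X z 1 ≤ b.a)
    (hN : 0 ≤ N) (hcard : Fintype.card ι = N * b.D) (hj : j ≤ N * b.D) :
    b.potential X z + j * b.loss
      ≤ N * ((z - β)⁻¹ ^ 24 * Real.exp b.rate + lossConst 24 b.κ b.ζ b.rate) * b.η ^ 15 := by
  have hη0 := b.η_pos
  have hD := b.D_pos
  have := sub_pos.mpr hβz
  have hpot := b.potential_le hβz hβ htr
  have hloss := b.loss_le hη
  rw [hp] at hpot hloss
  have hpow : b.η ^ 16 ≤ b.η ^ 15 := pow_le_pow_of_le_one hη0.le hη (by norm_num)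
  have hscale : b.D * (b.η⁻¹ ^ 9 / b.D ^ 4) = b.η ^ 15 := by
    rw [eq_inv_of_mul_eq_one_right hηD]
    field_simp
  rw [mul_add, add_mul]
  refine add_le_add ?_ ?_
  · calc b.potential X z ≤ _ := hpot
      _ = N * ((z - β)⁻¹ ^ 24 * Real.exp b.rate) * (b.η ^ 16 * (b.η ^ 8 * b.D)) := by
        rw [hcard]; ring
      _ ≤ _ := by rw [hηD, mul_one]; gcongr
  · calc j * b.loss
        ≤ N * b.D * (lossConst 24 b.κ b.ζ b.rate * (b.η⁻¹ ^ 9 / b.D ^ 4)) :=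
          mul_le_mul hj hloss b.loss_nonneg (by positivity)
      _ = N * lossConst 24 b.κ b.ζ b.rate * (b.D * (b.η⁻¹ ^ 9 / b.D ^ 4)) := by ring
      _ = _ := by rw [hscale]

end Barrier

lemma eventually_exists_barrier {p : ℕ} {κ γ ζ : ℝ} (hp : 2 ≤ p) (hκ : 0 < κ) (hκ1 : κ ≤ 1)
    (hγ : 0 < γ) (hζ : 0 < ζ) :
    ∀ᶠ d : ℕ in atTop, ∃ b : Barrier, b.p = p ∧ b.κ = κ ∧ b.a = γ * d ∧ b.ζ = ζ ∧ b.D = d ∧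
      b.η = (d : ℝ) ^ (-(1 / 8) : ℝ) := by
  have hsmall : ∀ C ε : ℝ, 0 < ε → ∀ᶠ d : ℕ in atTop,
      C * ((1 - κ) / (γ * d)) ≤ ε * (d : ℝ) ^ (-(1 / 8) : ℝ) := fun C ε hε => by
    have hlim : Tendsto (fun d : ℕ => C * ((1 - κ) / γ) * (d : ℝ) ^ (-(7 / 8) : ℝ)) atTop
        (𝓝 (C * ((1 - κ) / γ) * 0)) :=
      ((tendsto_rpow_neg_atTop (by norm_num)).comp tendsto_natCast_atTop_atTop).const_mul _
    rw [mul_zero] at hlim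
    filter_upwards [hlim.eventually_le_const hε, eventually_gt_atTop 0] with d hd hd0
    have hd0 : (0 : ℝ) < d := Nat.cast_pos.mpr hd0
    have hsplit : (d : ℝ)⁻¹ = (d : ℝ) ^ (-(7 / 8) : ℝ) * (d : ℝ) ^ (-(1 / 8) : ℝ) := by
      rw [← Real.rpow_add hd0, ← Real.rpow_neg_one]; norm_num
    calc C * ((1 - κ) / (γ * d)) = C * ((1 - κ) / γ) * (d : ℝ)⁻¹ := by field_simp
      _ = C * ((1 - κ) / γ) * (d : ℝ) ^ (-(7 / 8) : ℝ) * (d : ℝ) ^ (-(1 / 8) : ℝ) := by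
        rw [hsplit]; ring
      _ ≤ _ := by gcongr
  filter_upwards [hsmall 16 κ hκ, hsmall (2 * p) 1 one_pos, eventually_gt_atTop 0]
    with d hslack hgap hd
  have hd0 : (0 : ℝ) < d := Nat.cast_pos.mpr hd
  exact ⟨⟨p, κ, γ * d, ζ, (d : ℝ) ^ (-(1 / 8) : ℝ), d, hp, hκ, hκ1, by positivity, hζ,
    by positivity, hd0, hslack, by rwa [mul_assoc, one_mul] at hgap⟩, rfl, rfl, rfl, rfl, rfl, rfl⟩

theorem exists_family_exceedFraction_le_of_summable {n : ℕ} (hn : 0 < n) {κ g ζ β : ℝ} (hκ : 0 < κ)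
    (hκ1 : κ ≤ 1) (hg : 0 < g) (hζ : 0 < ζ) (hβζ : β < ζ) :
    ∃ τ : ℕ → ℝ, (∀ d, 0 ≤ τ d) ∧ Summable τ ∧ ∀ᶠ d : ℕ in atTop,
      ∃ (I : Type) (_ : Fintype I) (_ : Nonempty I)
        (J : I → Matrix (Fin (d + (n - 1) * d)) (Fin d) ℂ), (∀ i, (J i)ᴴ * J i = 1) ∧
        ∀ X : Matrix (Fin (d + (n - 1) * d)) (Fin (d + (n - 1) * d)) ℂ, X.PosSemidef →
          (algebraMap ℝ _ β - X).PosSemidef → resolventTrace X ζ 1 ≤ g * (n * d) →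
          exceedFraction (ζ - (1 - 1 / (n : ℝ)) * ((1 - κ) / g)) J X ≤ τ d := by
  have hn0 : (0 : ℝ) < n := Nat.cast_pos.mpr hn
  have hn1 : ((n - 1 : ℕ) : ℝ) = n - 1 := Nat.cast_pred hn
  set θ : ℝ := 4 * ((24 : ℕ) : ℝ) ^ 2 * (g * n) ^ 2 * ζ ^ 2 / κ with hθ
  set C : ℝ := n * ((ζ - β)⁻¹ ^ 24 * Real.exp θ + lossConst 24 κ ζ θ)
  have hC0 : 0 ≤ C := by
    have hloss : 0 ≤ lossConst 24 κ ζ θ := lossConst_nonneg hκ hζ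
    have : 0 < ζ - β := sub_pos.mpr hβζ
    positivity
  refine ⟨fun d => C * (d : ℝ) ^ (-(15 / 8) : ℝ), fun d => by positivity,
    (Real.summable_nat_rpow.mpr (by norm_num)).mul_left C, ?_⟩
  filter_upwards [eventually_exists_barrier (p := 24) (by norm_num) hκ hκ1
    (mul_pos hg hn0) hζ, eventually_ge_atTop 1] with d ⟨b, hp, hbκ, hba, hbζ, hbD, hbη⟩ hd
  have hd1 : (1 : ℝ) ≤ d := Nat.one_le_cast.mpr hd
  have hd0 : (0 : ℝ) < d := one_pos.trans_le hd1
  have hrate : b.rate = θ := by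
    rw [Barrier.rate, hp, hbκ, hba, hbζ, hbD, hθ]; field_simp
  have hηD : b.η ^ 8 * b.D = 1 := by
    rw [hbη, hbD, ← Real.rpow_mul_natCast hd0.le, ← Real.rpow_add_one hd0.ne']; norm_num
  have hη15 : b.η ^ 15 = (d : ℝ) ^ (-(15 / 8) : ℝ) := by
    rw [hbη, ← Real.rpow_mul_natCast hd0.le]; norm_num
  have hη1 : b.η ≤ 1 := hbη ▸ Real.rpow_le_one_of_one_le_of_nonpos hd1 (by norm_num)
  have hend : ζ - (1 - 1 / (n : ℝ)) * ((1 - κ) / g) + ((n - 1) * d : ℕ) * b.shift = ζ := by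
    rw [Barrier.shift, hbκ, hba, Nat.cast_mul, hn1]
    field_simp
    ring
  obtain ⟨I, hI, hI', J, hJ, hJX⟩ :=
    b.exists_family_exceedFraction_le hbD.le ((n - 1) * d) (hend.trans hbζ.symm).le
  rw [hend] at hJX
  refine ⟨I, hI, hI', J, hJ, fun X hX hβ htr => ?_⟩
  replace htr : resolventTrace X ζ 1 ≤ b.a := by rwa [hba, mul_assoc]
  refine (hJX X hX (posDef_algebraMap_sub_of_lt hβ hβζ) htr).trans ?_
  have hbound := b.potential_add_mul_loss_le (N := n) (j := ((n - 1) * d : ℕ)) hp hηD hη1 hβζ hβ htr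
    hn0.le (by rw [hbD, Fintype.card_fin]; push_cast; rw [hn1]; ring)
    (by rw [hbD]; push_cast; rw [hn1]; gcongr; linarith)
  rwa [hrate, hbκ, hbζ, hη15] at hbound

end Rate

section QuadraticFormBounds

variable {ι : Type*} [Fintype ι] {X : Matrix ι ι ℂ}

lemma quadRe_add_le (hX : X.PosSemidef) {t : ℝ} (ht : 0 < t) (v w : ι → ℂ) :
    quadRe X (v + w) ≤ (1 + t) * quadRe X v + (1 + t⁻¹) * quadRe X w := by
  set x := (star v ⬝ᵥ (X *ᵥ w)).re + (star w ⬝ᵥ (X *ᵥ v)).re with hx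
  have hadd : quadRe X (v + w) = quadRe X v + x + quadRe X w := by
    simp only [hx, quadRe, star_add, mulVec_add, add_dotProduct, dotProduct_add, Complex.add_re]
    ring
  have hsub : quadRe X ((t : ℂ) • v - w) = t ^ 2 * quadRe X v - t * x + quadRe X w := by
    simp only [hx, quadRe, star_sub, star_smul, mulVec_sub, mulVec_smul, sub_dotProduct,
      dotProduct_sub, smul_dotProduct, dotProduct_smul, Complex.sub_re, smul_eq_mul,
      RCLike.star_def, Complex.conj_ofReal, Complex.re_ofReal_mul]
    ring
  have hnonneg := mul_nonneg (inv_nonneg.mpr ht.le) (hsub ▸ quadRe_nonneg hX ((t : ℂ) • v - w))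
  have hexpand : t⁻¹ * (t ^ 2 * quadRe X v - t * x + quadRe X w)
      = t * quadRe X v - x + t⁻¹ * quadRe X w := by field_simp
  linarith

lemma quadRe_smul (r : ℝ) (v : ι → ℂ) : quadRe X ((r : ℂ) • v) = r ^ 2 * quadRe X v := by
  simp only [quadRe, star_smul, mulVec_smul, smul_dotProduct, dotProduct_smul, smul_eq_mul,
    RCLike.star_def, Complex.conj_ofReal, Complex.re_ofReal_mul]
  ring

lemma star_dotProduct_self (v : ι → ℂ) : star v ⬝ᵥ v = ((‖WithLp.toLp 2 v‖ ^ 2 : ℝ) : ℂ) := by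
  rw [EuclideanSpace.norm_sq_eq, dotProduct, Complex.ofReal_sum]
  refine Finset.sum_congr rfl fun i _ => ?_
  rw [Pi.star_apply, RCLike.star_def, Complex.conj_mul', Complex.ofReal_pow]

lemma trace_mul_conjTranspose_mul_self_re {κ : Type*} [Fintype κ] (W : Matrix κ ι ℂ) :
    (X * (Wᴴ * W)).trace.re = ∑ i, quadRe X (star (W i)) := by
  rw [← Matrix.mul_assoc, Matrix.trace_mul_comm, ← Matrix.mul_assoc, Matrix.trace, Complex.re_sum]
  refine Finset.sum_congr rfl fun i => fun _ => congrArg Complex.re ?_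
  rw [diag_apply, Matrix.mul_assoc, Matrix.mul_apply, star_star]
  rfl

variable [DecidableEq ι]

lemma quadRe_algebraMap_sub (z : ℝ) (v : ι → ℂ) :
    quadRe (algebraMap ℝ (Matrix ι ι ℂ) z - X) v = z * (star v ⬝ᵥ v).re - quadRe X v := by
  rw [quadRe_sub, quadRe, Algebra.algebraMap_eq_smul_one, smul_mulVec, one_mulVec, dotProduct_smul,
    Complex.smul_re, smul_eq_mul]

lemma quadRe_le_of_posSemidef_algebraMap_sub {z : ℝ}
    (hz : (algebraMap ℝ (Matrix ι ι ℂ) z - X).PosSemidef) (v : ι → ℂ) :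
    quadRe X v ≤ z * (star v ⬝ᵥ v).re :=
  sub_nonneg.mp (quadRe_algebraMap_sub z v ▸ quadRe_nonneg hz v)

end QuadraticFormBounds

section BlockPositivity

variable {α β : Type*} [DecidableEq β]

/-- The map `v ↦ a ⊗ v`. -/
def tensorLeft (β : Type*) [DecidableEq β] (a : α → ℂ) : Matrix (α × β) β ℂ :=
  .of fun p j => a p.1 * (1 : Matrix β β ℂ) p.2 j

variable [Fintype β]

lemma tensorLeft_mulVec_apply (a : α → ℂ) (v : β → ℂ) (p : α × β) :
    (tensorLeft β a *ᵥ v) p = a p.1 * v p.2 := by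
  simp [tensorLeft, mulVec, dotProduct, one_apply]

variable [Fintype α]

lemma star_tensorLeft_mulVec_dotProduct_self (a : α → ℂ) (v : β → ℂ) :
    star (tensorLeft β a *ᵥ v) ⬝ᵥ (tensorLeft β a *ᵥ v) = (star a ⬝ᵥ a) * (star v ⬝ᵥ v) := by
  simp only [dotProduct, Pi.star_apply, tensorLeft_mulVec_apply, star_mul', Fintype.sum_prod_type,
    Finset.sum_mul_sum, mul_mul_mul_comm]

lemma conjTranspose_tensorLeft_mul_self {a : α → ℂ} (ha : star a ⬝ᵥ a = 1) :
    (tensorLeft β a)ᴴ * tensorLeft β a = 1 := by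
  ext i j
  simp only [dotProduct, Pi.star_apply, RCLike.star_def] at ha
  simp only [tensorLeft, Matrix.mul_apply, conjTranspose_apply, of_apply, Fintype.sum_prod_type,
    one_apply, mul_ite, mul_one, mul_zero, RCLike.star_def, apply_ite (starRingEnd ℂ), map_zero,
    ite_mul, zero_mul, Finset.sum_ite_eq', Finset.mem_univ, if_true]
  rcases eq_or_ne j i with rfl | hij
  · simp only [if_true, ha]
  · simp only [if_neg hij, if_neg hij.symm, Finset.sum_const_zero]

/-- Block positivity: the quadratic form of `H` is nonnegative on product vectors. The block
positive matrices form the dual cone of the separable ones. -/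
def IsBlockPositive (H : Matrix (α × β) (α × β) ℂ) : Prop :=
  ∀ a v, 0 ≤ quadRe H (tensorLeft β a *ᵥ v)

variable [DecidableEq α]

lemma IsBlockPositive.trace_mul_nonneg {n d : ℕ} {H X : Matrix (Fin n × Fin d) (Fin n × Fin d) ℂ}
    (hH : IsBlockPositive H) (hX : X ∈ SEP n d) : 0 ≤ (H * X).trace.re := by
  obtain ⟨k, P, Q, hP, hQ, rfl⟩ := hX
  rw [Finset.mul_sum, trace_sum, Complex.re_sum]
  refine Finset.sum_nonneg fun i _ => ?_
  open scoped MatrixOrder in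
  obtain ⟨V, hV⟩ := CStarAlgebra.nonneg_iff_eq_star_mul_self.mp (hP i).nonneg
  open scoped MatrixOrder in
  obtain ⟨W, hW⟩ := CStarAlgebra.nonneg_iff_eq_star_mul_self.mp (hQ i).nonneg
  rw [hV, hW, star_eq_conjTranspose, star_eq_conjTranspose, mul_kronecker_mul,
    ← conjTranspose_kronecker, trace_mul_conjTranspose_mul_self_re]
  refine Finset.sum_nonneg fun p _ => ?_
  have hrow : star ((V ⊗ₖ W) p) = tensorLeft (Fin d) (star (V p.1)) *ᵥ star (W p.2) := by
    ext q
    rw [tensorLeft_mulVec_apply]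
    exact star_mul' _ _
  exact hrow ▸ hH _ _

/-- The matrix itself is used as the separable state against which `h - X` is tested. -/
lemma trace_mul_self_le_of_mem_SEP {n d : ℕ} {X : Matrix (Fin n × Fin d) (Fin n × Fin d) ℂ} {h : ℝ}
    (hX : IsBlockPositive (algebraMap ℝ _ h - X)) (hS : X ∈ SEP n d) :
    (X * X).trace.re ≤ h * X.trace.re := by
  have htrace := hX.trace_mul_nonneg hS
  rwa [Matrix.sub_mul, trace_sub, Complex.sub_re, Algebra.algebraMap_eq_smul_one, smul_mul,
    Matrix.one_mul, trace_smul, Complex.smul_re, smul_eq_mul, sub_nonneg] at htrace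

lemma quadRe_tensorLeft_le_of_net {X : Matrix (α × β) (α × β) ℂ} {t c b : ℝ} (ht : 0 < t)
    (hX : X.PosSemidef) (hb : (algebraMap ℝ _ b - X).PosSemidef) (hb0 : 0 ≤ b)
    {x a : EuclideanSpace ℂ α} (hxa : ‖a - x‖ ≤ t)
    (hc : (algebraMap ℝ _ c - compress (tensorLeft β x) X).PosSemidef) (v : β → ℂ) :
    quadRe X (tensorLeft β a *ᵥ v) ≤ ((1 + t) * c + (t ^ 2 + t) * b) * (star v ⬝ᵥ v).re := by
  have hsplit : tensorLeft β a *ᵥ v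
      = tensorLeft β x *ᵥ v + tensorLeft β (a - x : EuclideanSpace ℂ α) *ᵥ v := by
    ext p
    simp only [Pi.add_apply, tensorLeft_mulVec_apply, PiLp.sub_apply]
    ring
  have hnear : quadRe X (tensorLeft β x *ᵥ v) ≤ c * (star v ⬝ᵥ v).re :=
    quadRe_conjTranspose_mul_mul X _ v ▸ quadRe_le_of_posSemidef_algebraMap_sub hc v
  have hv : 0 ≤ (star v ⬝ᵥ v).re := (Complex.nonneg_iff.mp (dotProduct_star_self_nonneg v)).1
  have herr : quadRe X (tensorLeft β (a - x : EuclideanSpace ℂ α) *ᵥ v)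
      ≤ b * (t ^ 2 * (star v ⬝ᵥ v).re) := by
    refine (quadRe_le_of_posSemidef_algebraMap_sub hb _).trans ?_
    rw [star_tensorLeft_mulVec_dotProduct_self, star_dotProduct_self, Complex.re_ofReal_mul]
    gcongr
  rw [hsplit]
  calc _ ≤ _ := quadRe_add_le hX ht _ _
    _ ≤ (1 + t) * (c * (star v ⬝ᵥ v).re) + (1 + t⁻¹) * (b * (t ^ 2 * (star v ⬝ᵥ v).re)) := by
      gcongr
    _ = _ := by field_simp

lemma isBlockPositive_of_net {X : Matrix (α × β) (α × β) ℂ} {t c b : ℝ} (ht : 0 < t)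
    (hX : X.PosSemidef) (hb : (algebraMap ℝ _ b - X).PosSemidef) (hb0 : 0 ≤ b)
    {F : Set (EuclideanSpace ℂ α)}
    (hF : Metric.sphere (0 : EuclideanSpace ℂ α) 1 ⊆ ⋃ x ∈ F, Metric.ball x t)
    (hc : ∀ x ∈ F, (algebraMap ℝ _ c - compress (tensorLeft β x) X).PosSemidef) :
    IsBlockPositive (algebraMap ℝ _ ((1 + t) * c + (t ^ 2 + t) * b) - X) := by
  intro a v
  rw [quadRe_algebraMap_sub, sub_nonneg, star_tensorLeft_mulVec_dotProduct_self,
    star_dotProduct_self a, Complex.re_ofReal_mul]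
  set r := ‖WithLp.toLp 2 a‖
  rcases eq_or_ne (WithLp.toLp 2 a) 0 with ha | ha
  · obtain rfl : a = 0 := congrArg WithLp.ofLp ha
    simp [r, tensorLeft, quadRe, mulVec, dotProduct]
  have hr : r ≠ 0 := norm_ne_zero_iff.mpr ha
  set u : EuclideanSpace ℂ α := (r : ℂ)⁻¹ • WithLp.toLp 2 a with hu
  have hunit : u ∈ Metric.sphere 0 1 := by
    rw [mem_sphere_zero_iff_norm, hu, norm_smul, norm_inv, Complex.norm_real, norm_norm,
      inv_mul_cancel₀ hr]
  have hau : tensorLeft β a *ᵥ v = (r : ℂ) • (tensorLeft β u *ᵥ v) := by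
    ext p
    simp only [Pi.smul_apply, smul_eq_mul, tensorLeft_mulVec_apply, hu, PiLp.smul_apply]
    rw [← mul_assoc, mul_inv_cancel_left₀ (Complex.ofReal_ne_zero.mpr hr)]
  obtain ⟨x, hxF, hx⟩ := Set.mem_iUnion₂.mp (hF hunit)
  rw [hau, quadRe_smul, mul_left_comm]
  gcongr
  exact quadRe_tensorLeft_le_of_net ht hX hb hb0 (dist_eq_norm u x ▸ (Metric.mem_ball.mp hx).le)
    (hc x hxF) v

end BlockPositivity

section Measurability

variable {ι κ : Type*}

instance borelSpace_matrix [Finite ι] [Finite κ] : BorelSpace (Matrix ι κ ℂ) :=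
  inferInstanceAs (BorelSpace (ι → κ → ℂ))

lemma isClosed_setOf_posSemidef [Finite ι] : IsClosed {X : Matrix ι ι ℂ | X.PosSemidef} := by
  have := Fintype.ofFinite ι
  simp only [posSemidef_iff_dotProduct_mulVec, IsHermitian, Set.ofPred_and, Set.ofPred_forall]
  refine (isClosed_eq (by fun_prop) continuous_id).inter (isClosed_iInter fun x => ?_)
  exact isClosed_le continuous_const
    (continuous_const.dotProduct (continuous_id.matrix_mulVec continuous_const))

variable [Fintype ι] [Fintype κ]

lemma measurable_compress (J : Matrix ι κ ℂ) : Measurable (compress J) :=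
  ((continuous_const.matrix_mul continuous_id).matrix_mul continuous_const).measurable

lemma measurableSet_exceedSet [DecidableEq κ] (c : ℝ) : MeasurableSet (exceedSet κ c) :=
  (isClosed_setOf_posSemidef.preimage (continuous_const.sub continuous_id)).measurableSet.compl

end Measurability

section TypicalSet

variable {ι κ : Type*} [Fintype ι] [DecidableEq ι] [Fintype κ] [DecidableEq κ]

/-- The positive semidefinite matrices with spectrum in `[0, β]` whose normalised first and second
moments are `ε`-close to `m` and `m ^ 2 + v`. -/
def typicalSet (ι : Type*) [Fintype ι] [DecidableEq ι] (β m v ε : ℝ) : Set (Matrix ι ι ℂ) :=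
  {X | X.PosSemidef ∧ (algebraMap ℝ _ β - X).PosSemidef ∧
    |X.trace.re - m * Fintype.card ι| ≤ ε * Fintype.card ι ∧
    |(X * X).trace.re - (m ^ 2 + v) * Fintype.card ι| ≤ ε * Fintype.card ι}

/-- The bound on the normalised trace of `(ζ - X)⁻¹` for `X` in `typicalSet ι β m v ε`. -/
def stieltjesBound (ζ β m v ε : ℝ) : ℝ :=
  1 / (ζ - m) + ε / (ζ - m) ^ 2 + (v + (1 + 2 * m) * ε) / ((ζ - m) ^ 2 * (ζ - β))

variable {β m v ε : ℝ} {X : Matrix ι ι ℂ}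

lemma stieltjesBound_pos {ζ : ℝ} (hβζ : β < ζ) (hmζ : m < ζ) (hm : 0 ≤ m) (hv : 0 ≤ v)
    (hε : 0 ≤ ε) : 0 < stieltjesBound ζ β m v ε := by
  have : 0 < ζ - m := sub_pos.mpr hmζ
  have : 0 < ζ - β := sub_pos.mpr hβζ
  unfold stieltjesBound
  positivity

lemma measurableSet_typicalSet : MeasurableSet (typicalSet ι β m v ε) := by
  refine (isClosed_setOf_posSemidef.inter (IsClosed.inter ?_ (IsClosed.inter ?_ ?_))).measurableSet
  · exact isClosed_setOf_posSemidef.preimage (continuous_const.sub continuous_id)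
  · exact isClosed_le (f := fun X : Matrix ι ι ℂ => |X.trace.re - m * Fintype.card ι|)
      (by fun_prop) continuous_const
  · exact isClosed_le
      (f := fun X : Matrix ι ι ℂ => |(X * X).trace.re - (m ^ 2 + v) * Fintype.card ι|)
      (by fun_prop) continuous_const

lemma compress_mem_typicalSet {P : Matrix ι κ ℂ} (hP : Pᴴ * P = 1) (hP' : P * Pᴴ = 1)
    (hX : X ∈ typicalSet ι β m v ε) : compress P X ∈ typicalSet κ β m v ε := by
  have htrace : ∀ Y : Matrix ι ι ℂ, (Pᴴ * Y * P).trace = Y.trace := fun Y => by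
    rw [Matrix.trace_mul_comm, ← Matrix.mul_assoc, hP', Matrix.one_mul]
  have hcard : (Fintype.card κ : ℝ) = Fintype.card ι := by
    have hone := htrace 1
    rw [Matrix.mul_one, hP, trace_one, trace_one] at hone
    exact_mod_cast hone
  have hsq : compress P X * compress P X = Pᴴ * (X * X) * P := by
    calc Pᴴ * X * P * (Pᴴ * X * P) = Pᴴ * X * (P * Pᴴ) * (X * P) := by
          simp only [Matrix.mul_assoc]
      _ = _ := by rw [hP', Matrix.mul_one]; simp only [Matrix.mul_assoc]
  obtain ⟨hpos, hle, hfirst, hsecond⟩ := hX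
  refine ⟨hpos.conjTranspose_mul_mul_same P, ?_, ?_, ?_⟩
  · exact algebraMap_sub_compress hP X β ▸ hle.conjTranspose_mul_mul_same P
  · rwa [compress, htrace, hcard]
  · rwa [hsq, htrace, hcard]

lemma resolventTrace_le_of_mem_typicalSet {ζ : ℝ} (hm : 0 ≤ m) (hβζ : β < ζ) (hmζ : m < ζ)
    (hX : X ∈ typicalSet ι β m v ε) :
    resolventTrace X ζ 1 ≤ stieltjesBound ζ β m v ε * Fintype.card ι := by
  obtain ⟨-, hle, hfirst, hsecond⟩ := hX
  set N : ℝ := (Fintype.card ι : ℝ)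
  have : 0 < ζ - m := sub_pos.mpr hmζ
  have : 0 < ζ - β := sub_pos.mpr hβζ
  have hmean : X.trace.re - N * m ≤ ε * N := by linarith [(abs_le.mp hfirst).2]
  have hvar : (X * X).trace.re - 2 * m * X.trace.re + N * m ^ 2 ≤ (v + (1 + 2 * m) * ε) * N := by
    nlinarith [(abs_le.mp hfirst).1, (abs_le.mp hsecond).2]
  calc resolventTrace X ζ 1
      ≤ N / (ζ - m) + (X.trace.re - N * m) / (ζ - m) ^ 2
        + ((X * X).trace.re - 2 * m * X.trace.re + N * m ^ 2) / ((ζ - m) ^ 2 * (ζ - β)) :=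
        resolventTrace_one_le hβζ hmζ hle
    _ ≤ N / (ζ - m) + ε * N / (ζ - m) ^ 2
        + (v + (1 + 2 * m) * ε) * N / ((ζ - m) ^ 2 * (ζ - β)) := by gcongr
    _ = stieltjesBound ζ β m v ε * N := by unfold stieltjesBound; ring

lemma notMem_SEP_of_mem_typicalSet {n d : ℕ} (hn : 0 < n) (hd : 0 < d) {c t : ℝ}
    {X : Matrix (Fin n × Fin d) (Fin n × Fin d) ℂ} (ht : 0 < t) (hβ : 0 ≤ β) (hε : ε < m ^ 2 + v)
    (hlt : ((1 + t) * c + (t ^ 2 + t) * β) * (m + ε) < m ^ 2 + v - ε)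
    {F : Set (EuclideanSpace ℂ (Fin n))} (hF : Metric.sphere 0 1 ⊆ ⋃ x ∈ F, Metric.ball x t)
    (hX : X ∈ typicalSet (Fin n × Fin d) β m v ε)
    (hc : ∀ x ∈ F, compress (tensorLeft (Fin d) x) X ∉ exceedSet (Fin d) c) : X ∉ SEP n d := by
  intro hS
  obtain ⟨hpos, hle, hfirst, hsecond⟩ := hX
  have hsep := trace_mul_self_le_of_mem_SEP
    (isBlockPositive_of_net ht hpos hle hβ hF fun x hx => not_not.mp (hc x hx)) hS
  set h := (1 + t) * c + (t ^ 2 + t) * β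
  set N : ℝ := (Fintype.card (Fin n × Fin d) : ℝ) with hN
  have hN0 : 0 < N := by
    rw [hN, Fintype.card_prod, Fintype.card_fin, Fintype.card_fin]
    exact_mod_cast Nat.mul_pos hn hd
  have htrace0 : 0 ≤ X.trace.re := (Complex.nonneg_iff.mp hpos.trace_nonneg).1
  have htrace : X.trace.re ≤ (m + ε) * N := by linarith [(abs_le.mp hfirst).2]
  have hsq : (m ^ 2 + v - ε) * N ≤ (X * X).trace.re := by linarith [(abs_le.mp hsecond).1]
  have hsq0 : 0 < (m ^ 2 + v - ε) * N := mul_pos (sub_pos.mpr hε) hN0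
  have hh : 0 ≤ h := by
    by_contra! hneg
    linarith [mul_nonpos_of_nonpos_of_nonneg hneg.le htrace0]
  linarith [mul_le_mul_of_nonneg_left htrace hh, mul_lt_mul_of_pos_right hlt hN0]

end TypicalSet

section RandomRotation

variable {ι κ Ω : Type*} [Fintype ι] [DecidableEq ι] [Fintype κ] [MeasurableSpace Ω]
  {ℙ : Measure Ω} {Y : Ω → Matrix ι ι ℂ} {S : Set (Matrix ι ι ℂ)} {E : Set (Matrix κ κ ℂ)}

lemma measureReal_compress_mem_le_of_isometry [DecidableEq κ] [IsFiniteMeasure ℙ]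
    (hY : Measurable Y) (hinv : ∀ U ∈ unitary (Matrix ι ι ℂ),
      Measure.map (fun ω => U * Y ω * star U) ℙ = Measure.map Y ℙ)
    (hS : MeasurableSet S) (hSU : ∀ U ∈ unitary (Matrix ι ι ℂ), ∀ X ∈ S, compress U X ∈ S)
    (hE : MeasurableSet E) {J K : Matrix ι κ ℂ} (hJ : Jᴴ * J = 1) (hK : Kᴴ * K = 1) :
    ℙ.real {ω | Y ω ∈ S ∧ compress K (Y ω) ∈ E} ≤ ℙ.real {ω | Y ω ∈ S ∧ compress J (Y ω) ∈ E} := by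
  obtain ⟨⟨U, hU⟩, rfl⟩ := exists_unitary_mul_eq hK hJ
  have hUstar : Uᴴ ∈ unitary (Matrix ι ι ℂ) := Unitary.star_mem hU
  set T : Set (Matrix ι ι ℂ) := S ∩ compress K ⁻¹' E
  have hT : MeasurableSet T := hS.inter (measurable_compress K hE)
  have hrot : Measure.map (compress U ∘ Y) ℙ = Measure.map Y ℙ := by
    have hmap := hinv Uᴴ hUstar
    rwa [star_eq_conjTranspose, conjTranspose_conjTranspose] at hmap
  have hback : ∀ X, compress Uᴴ (compress U X) = X := fun X => by
    rw [← compress_mul, ← star_eq_conjTranspose, mem_unitaryGroup_iff.mp hU, compress,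
      conjTranspose_one, Matrix.one_mul, Matrix.mul_one]
  calc ℙ.real (Y ⁻¹' T) = (Measure.map Y ℙ).real T := (map_measureReal_apply hY hT).symm
    _ = ℙ.real (compress U ∘ Y ⁻¹' T) := by
        rw [← hrot, map_measureReal_apply ((measurable_compress U).comp hY) hT]
    _ ≤ ℙ.real {ω | Y ω ∈ S ∧ compress (U * K) (Y ω) ∈ E} := measureReal_mono fun ω hω =>
        ⟨hback (Y ω) ▸ hSU _ hUstar _ hω.1, compress_mul K U (Y ω) ▸ hω.2⟩

lemma expect_measureReal_le [IsProbabilityMeasure ℙ] {I : Type*} [Fintype I] {A : I → Set Ω}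
    (hA : ∀ i, MeasurableSet (A i)) {τ : ℝ} (h : ∀ ω, 𝔼 i, (A i).indicator 1 ω ≤ τ) :
    𝔼 i, ℙ.real (A i) ≤ τ := by
  have hint : ∀ i ∈ Finset.univ, Integrable ((A i).indicator (1 : Ω → ℝ)) ℙ := fun i _ =>
    (integrable_const (1 : ℝ)).indicator (hA i)
  calc 𝔼 i, ℙ.real (A i) = ∫ ω, 𝔼 i, (A i).indicator (1 : Ω → ℝ) ω ∂ℙ := by
        simp only [Fintype.expect_eq_sum_div_card, integral_div, integral_finsetSum _ hint,
          integral_indicator_one (hA _)]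
    _ ≤ ∫ _, τ ∂ℙ := by
        refine integral_mono ?_ (integrable_const τ) h
        simp only [Fintype.expect_eq_sum_div_card]
        exact (integrable_finsetSum _ hint).div_const _
    _ = τ := by simp

/-- Unitary invariance allows the fixed isometry `K` to be averaged over the family `J`. -/
lemma measureReal_compress_mem_le [DecidableEq κ] [IsProbabilityMeasure ℙ]
    (hY : Measurable Y) (hinv : ∀ U ∈ unitary (Matrix ι ι ℂ),
      Measure.map (fun ω => U * Y ω * star U) ℙ = Measure.map Y ℙ)
    (hS : MeasurableSet S) (hSU : ∀ U ∈ unitary (Matrix ι ι ℂ), ∀ X ∈ S, compress U X ∈ S)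
    {I : Type*} [Fintype I] [Nonempty I] {J : I → Matrix ι κ ℂ} (hJ : ∀ i, (J i)ᴴ * J i = 1)
    {K : Matrix ι κ ℂ} (hK : Kᴴ * K = 1) {c τ : ℝ} (hτ : 0 ≤ τ)
    (h : ∀ X ∈ S, exceedFraction c J X ≤ τ) :
    ℙ.real {ω | Y ω ∈ S ∧ compress K (Y ω) ∈ exceedSet κ c} ≤ τ := by
  set A : I → Set Ω := fun i => {ω | Y ω ∈ S ∧ compress (J i) (Y ω) ∈ exceedSet κ c}
  have hA : ∀ i, MeasurableSet (A i) := fun i =>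
    (hY hS).inter (hY (measurable_compress _ (measurableSet_exceedSet c)))
  calc _ ≤ 𝔼 i, ℙ.real (A i) := Finset.le_expect Finset.univ_nonempty fun i _ =>
        measureReal_compress_mem_le_of_isometry hY hinv hS hSU (measurableSet_exceedSet c) (hJ i) hK
    _ ≤ τ := expect_measureReal_le hA fun ω => ?_
  by_cases hω : Y ω ∈ S
  · refine le_of_eq_of_le (Finset.expect_congr rfl fun i _ => ?_) (h _ hω)
    exact Set.indicator_const_eq_indicator_const (M := ℝ) (and_iff_right hω)
  · refine le_of_eq_of_le (Finset.expect_eq_zero fun i _ => ?_) hτ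
    simp [A, hω]

end RandomRotation

section StrongConvergence

variable {ι : Type*} [Fintype ι] [DecidableEq ι]

lemma polyApply_X (M : Matrix ι ι ℂ) : polyApply X M = M := by
  simp [polyApply]

lemma polyApply_X_sq (M : Matrix ι ι ℂ) : polyApply (X ^ 2) M = M * M := by
  simp [polyApply, sq]

open scoped Matrix.Norms.L2Operator MatrixOrder in
lemma posSemidef_algebraMap_sub_of_opNorm_le {M : Matrix ι ι ℂ} (hM : M.IsHermitian) {β : ℝ}
    (h : opNorm M ≤ β) : (algebraMap ℝ _ β - M).PosSemidef := by
  have hnorm : M ≤ algebraMap ℝ _ (opNorm M) := IsSelfAdjoint.le_algebraMap_norm_self hM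
  exact posSemidef_algebraMap_sub_mono (Matrix.le_iff.mp hnorm) h

lemma trace_re_le_of_posSemidef_algebraMap_sub {M : Matrix ι ι ℂ} {β : ℝ}
    (h : (algebraMap ℝ _ β - M).PosSemidef) : M.trace.re ≤ β * Fintype.card ι := by
  have htrace := (Complex.nonneg_iff.mp h.trace_nonneg).1
  simpa [Algebra.algebraMap_eq_smul_one, trace_sub, trace_smul] using htrace

lemma abs_re_sub_mul_le {N : ℝ} (hN : 0 < N) {z : ℂ} {m ε : ℝ} (h : ‖(N : ℂ)⁻¹ * z - m‖ ≤ ε) :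
    |z.re - m * N| ≤ ε * N := by
  have hre := (Complex.abs_re_le_norm _).trans h
  rw [Complex.sub_re, Complex.ofReal_re, ← Complex.ofReal_inv, Complex.re_ofReal_mul] at hre
  calc |z.re - m * N| = |N⁻¹ * z.re - m| * N := by
        rw [← abs_of_pos hN, ← abs_mul, abs_of_pos hN]; field_simp
    _ ≤ ε * N := by gcongr

lemma sSup_abs_msupport_le {A B : ℝ} {μ : Measure ℝ} (hA : 0 ≤ A)
    (hsupp : msupport μ ⊆ Set.Icc A B) (hpos : 0 < sSup ((fun x : ℝ => |x|) '' msupport μ)) :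
    sSup ((fun x : ℝ => |x|) '' msupport μ) ≤ B := by
  have hne : ((fun x : ℝ => |x|) '' msupport μ).Nonempty := by
    by_contra hempty
    rw [Set.not_nonempty_iff_eq_empty.mp hempty, Real.sSup_empty] at hpos
    exact hpos.false
  refine csSup_le hne ?_
  rintro _ ⟨x, hx, rfl⟩
  exact (abs_of_nonneg (hA.trans (hsupp hx).1)).trans_le (hsupp hx).2

section Deterministic

variable {n : ℕ} {m v S : ℝ} {M : (d : ℕ) → Matrix (Fin n × Fin d) (Fin n × Fin d) ℂ}

lemma le_of_tendsto_trace_of_tendsto_opNorm (hn : 0 < n) (hM : ∀ d, (M d).PosSemidef)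
    (htr : Tendsto (fun d : ℕ => ((n : ℂ) * (d : ℂ))⁻¹ * (M d).trace) atTop (𝓝 (m : ℂ)))
    (hop : Tendsto (fun d => opNorm (M d)) atTop (𝓝 S)) : m ≤ S := by
  have hre := (Complex.continuous_re.tendsto _).comp htr
  rw [Complex.ofReal_re] at hre
  refine le_of_tendsto_of_tendsto hre hop ?_
  filter_upwards [eventually_gt_atTop 0] with d hd
  have hN : (0 : ℝ) < (n * d : ℕ) := by exact_mod_cast Nat.mul_pos hn hd
  have htrace := trace_re_le_of_posSemidef_algebraMap_sub
    (posSemidef_algebraMap_sub_of_opNorm_le (hM d).1 le_rfl)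
  rw [Fintype.card_prod, Fintype.card_fin, Fintype.card_fin, mul_comm] at htrace
  rw [Function.comp_apply, ← Nat.cast_mul, ← Complex.ofReal_natCast, ← Complex.ofReal_inv,
    Complex.re_ofReal_mul]
  exact (inv_mul_le_iff₀ hN).mpr htrace

lemma eventually_mem_typicalSet (hn : 0 < n) {β ε : ℝ} (hε : 0 < ε) (hSβ : S < β)
    (hM : ∀ d, (M d).PosSemidef)
    (htr : Tendsto (fun d : ℕ => ((n : ℂ) * (d : ℂ))⁻¹ * (M d).trace) atTop (𝓝 (m : ℂ)))
    (hsq : Tendsto (fun d : ℕ => ((n : ℂ) * (d : ℂ))⁻¹ * (M d * M d).trace) atTop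
      (𝓝 ((m ^ 2 + v : ℝ) : ℂ)))
    (hop : Tendsto (fun d => opNorm (M d)) atTop (𝓝 S)) :
    ∀ᶠ d in atTop, M d ∈ typicalSet (Fin n × Fin d) β m v ε := by
  filter_upwards [Metric.tendsto_nhds.mp htr ε hε, Metric.tendsto_nhds.mp hsq ε hε,
    hop.eventually_lt_const hSβ, eventually_gt_atTop 0] with d hfirst hsecond hnorm hd
  have hN : (0 : ℝ) < Fintype.card (Fin n × Fin d) := by
    rw [Fintype.card_prod, Fintype.card_fin, Fintype.card_fin]
    exact_mod_cast Nat.mul_pos hn hd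
  have hcard : (n : ℂ) * (d : ℂ) = ((Fintype.card (Fin n × Fin d) : ℝ) : ℂ) := by simp
  rw [dist_eq_norm, hcard] at hfirst hsecond
  exact ⟨hM d, posSemidef_algebraMap_sub_of_opNorm_le (hM d).1 hnorm.le,
    abs_re_sub_mul_le hN hfirst.le, abs_re_sub_mul_le hN hsecond.le⟩

end Deterministic

section Random

variable {Ω : Type*} [MeasurableSpace Ω] {ℙ : Measure Ω} {n : ℕ}
  {X : (d : ℕ) → Ω → Matrix (Fin n × Fin d) (Fin n × Fin d) ℂ} {μ : Measure ℝ} {m v : ℝ}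

lemma StrongConv.ae_tendsto (h : StrongConv ℙ n X μ) (hmean : ∫ x, x ∂μ = m)
    (hvar : ∫ x, x ^ 2 ∂μ = m ^ 2 + v) :
    ∀ᵐ ω ∂ℙ, Tendsto (fun d : ℕ => ((n : ℂ) * (d : ℂ))⁻¹ * (X d ω).trace) atTop (𝓝 (m : ℂ)) ∧
      Tendsto (fun d : ℕ => ((n : ℂ) * (d : ℂ))⁻¹ * (X d ω * X d ω).trace) atTop
        (𝓝 ((m ^ 2 + v : ℝ) : ℂ)) ∧
      Tendsto (fun d => opNorm (X d ω)) atTop (𝓝 (sSup ((fun x : ℝ => |x|) '' msupport μ))) := by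
  filter_upwards [h] with ω hω
  have hfirst := hω Polynomial.X
  have hsecond := (hω (Polynomial.X ^ 2)).1
  simp only [polyApply_X, Polynomial.eval_X, hmean] at hfirst
  simp only [polyApply_X_sq, Polynomial.eval_pow, Polynomial.eval_X, hvar] at hsecond
  exact ⟨hfirst.1, hsecond, hfirst.2⟩

lemma StrongConv.le_of_msupport_subset [NeZero ℙ] (h : StrongConv ℙ n X μ) (hn : 0 < n)
    (hX : ∀ d ω, (X d ω).PosSemidef) {A B : ℝ} (hA : 0 ≤ A) (hm : 0 < m)
    (hsupp : msupport μ ⊆ Set.Icc A B) (hmean : ∫ x, x ∂μ = m) :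
    m ≤ sSup ((fun x : ℝ => |x|) '' msupport μ) ∧
      sSup ((fun x : ℝ => |x|) '' msupport μ) ≤ B := by
  obtain ⟨ω, htr, -, hop⟩ := (h.ae_tendsto hmean (add_sub_cancel _ _).symm).exists
  have hmS := le_of_tendsto_trace_of_tendsto_opNorm hn (fun d => hX d ω) htr hop
  exact ⟨hmS, sSup_abs_msupport_le hA hsupp (hm.trans_le hmS)⟩

lemma StrongConv.ae_eventually_mem_typicalSet (h : StrongConv ℙ n X μ) (hn : 0 < n)
    (hX : ∀ d ω, (X d ω).PosSemidef) (hmean : ∫ x, x ∂μ = m)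
    (hvar : ∫ x, x ^ 2 ∂μ = m ^ 2 + v) {β ε : ℝ} (hε : 0 < ε)
    (hβ : sSup ((fun x : ℝ => |x|) '' msupport μ) < β) :
    ∀ᵐ ω ∂ℙ, ∀ᶠ d in atTop, X d ω ∈ typicalSet (Fin n × Fin d) β m v ε := by
  filter_upwards [h.ae_tendsto hmean hvar] with ω ⟨htr, hsq, hop⟩
  exact eventually_mem_typicalSet hn hε hβ (fun d => hX d ω) htr hsq hop

end Random

end StrongConvergence

section Parameters

/-- The bound on the spectrum of the compressions that the barrier argument gives for typical
matrices, when the barrier starts at `ζ` and a fraction `ε` of its motion is given up. -/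
def barrierEdge (n : ℕ) (ζ β m v ε : ℝ) : ℝ :=
  ζ - (1 - 1 / (n : ℝ)) * ((1 - ε) / stieltjesBound ζ β m v ε)

variable {n : ℕ} {B m s v : ℝ}

lemma barrierEdge_zero (hn : 0 < n) (hmB : m ≤ B) (hs : 0 < s) (hv : 0 ≤ v)
    (hsv : s ^ 2 = v * ((n : ℝ) - 1)) :
    barrierEdge n (B + s) B m v 0 =
      m + (B + s - m) / n + (B + s - m) * s ^ 2 / (n * ((B + s - m) * s + v)) := by
  have : (0 : ℝ) < n := by exact_mod_cast hn
  have hw : 0 < B + s - m := by linarith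
  obtain ⟨w, hwdef⟩ : ∃ w, w = B + s - m := ⟨_, rfl⟩
  rw [← hwdef] at hw ⊢
  have hζ : B + s = m + w := by rw [hwdef]; ring
  rw [barrierEdge, stieltjesBound, ← hwdef, add_sub_cancel_left, hζ, hsv]
  simp only [mul_zero, add_zero, sub_zero, zero_div]
  field_simp
  ring

lemma barrierEdge_zero_lt (hn : 0 < n) (hmB : m ≤ B) (hs : 0 < s) (hv : 0 < v)
    (hsv : s ^ 2 = v * ((n : ℝ) - 1)) :
    barrierEdge n (B + s) B m v 0 < m + (B - m + 2 * s) / n := by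
  have hn0 : (0 : ℝ) < n := by exact_mod_cast hn
  have hw : 0 < B + s - m := by linarith
  have hlast : (B + s - m) * s ^ 2 / (n * ((B + s - m) * s + v)) < s / n := by
    rw [div_lt_div_iff₀ (by positivity) hn0]
    have : 0 < s * n * v := by positivity
    nlinarith
  calc barrierEdge n (B + s) B m v 0
      < m + (B + s - m) / n + s / n := by rw [barrierEdge_zero hn hmB hs hv.le hsv]; gcongr
    _ = m + (B - m + 2 * s) / n := by ring

lemma continuousAt_barrierEdge (hm : 0 ≤ m) (hmB : m ≤ B) (hs : 0 < s) (hv : 0 ≤ v) :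
    ContinuousAt (fun ε => barrierEdge n (B + s) (B + ε) m v ε) 0 := by
  have hw : 0 < B + s - m := by linarith
  have hgap : 0 < (B + s - m) ^ 2 * (B + s - B) := by
    rw [add_sub_cancel_left]; positivity
  have hstieltjes : ContinuousAt (fun ε => stieltjesBound (B + s) (B + ε) m v ε) 0 :=
    ContinuousAt.add (by fun_prop)
      (ContinuousAt.div (by fun_prop) (by fun_prop) (by simpa using hgap.ne'))
  have hpos : 0 < stieltjesBound (B + s) (B + 0) m v 0 :=
    stieltjesBound_pos (by linarith) (by linarith) hm hv le_rfl
  exact continuousAt_const.sub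
    (continuousAt_const.mul (ContinuousAt.div (by fun_prop) hstieltjes hpos.ne'))

lemma exists_slack (hn : 0 < n) (hm : 0 < m) (hmB : m ≤ B) (hs : 0 < s) (hv : 0 < v)
    (hsv : s ^ 2 = v * ((n : ℝ) - 1)) (hcond : (B - m + 2 * s) / n < v / m) :
    ∃ ε : ℝ, 0 < ε ∧ ε ≤ 1 ∧ ε < s ∧ ε < m ^ 2 + v ∧
      ((1 + ε) * barrierEdge n (B + s) (B + ε) m v ε + (ε ^ 2 + ε) * (B + ε)) * (m + ε)
        < m ^ 2 + v - ε := by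
  set F : ℝ → ℝ := fun ε =>
    ((1 + ε) * barrierEdge n (B + s) (B + ε) m v ε + (ε ^ 2 + ε) * (B + ε)) * (m + ε) + ε
  have hF : ContinuousAt F 0 := by
    have := continuousAt_barrierEdge (n := n) hm.le hmB hs hv.le
    fun_prop
  have hF0 : F 0 < m ^ 2 + v := by
    have hedge : barrierEdge n (B + s) B m v 0 < m + v / m := by
      linarith [barrierEdge_zero_lt hn hmB hs hv hsv]
    calc F 0 = barrierEdge n (B + s) B m v 0 * m := by simp [F]
      _ < (m + v / m) * m := by gcongr
      _ = m ^ 2 + v := by field_simp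
  have hsmall : ∀ᶠ ε in 𝓝[>] (0 : ℝ), F ε < m ^ 2 + v ∧ ε < 1 ∧ ε < s ∧ ε < m ^ 2 + v :=
    Eventually.filter_mono nhdsWithin_le_nhds <|
      (hF.eventually_lt_const hF0).and <| (eventually_lt_nhds one_pos).and <|
        (eventually_lt_nhds hs).and (eventually_lt_nhds (by positivity))
  obtain ⟨ε, ⟨hFε, hε1, hεs, hεv⟩, hε⟩ := (hsmall.and self_mem_nhdsWithin).exists
  exact ⟨ε, hε, hε1.le, hεs, hεv, lt_sub_iff_add_lt.mpr hFε⟩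

lemma div_lt_sq_div_of_threshold {σ : ℝ} (hn : 0 < n) (hm : 0 < m)
    (hcond : B / m < 1 + (n : ℝ) * σ ^ 2 / m ^ 2 - 2 * (σ / m) * √((n : ℝ) - 1)) :
    (B - m + 2 * (σ * √((n : ℝ) - 1))) / n < σ ^ 2 / m := by
  have hn0 : (0 : ℝ) < n := by exact_mod_cast hn
  rw [div_lt_iff₀ hm] at hcond
  rw [div_lt_iff₀ hn0]
  have hexpand : (1 + (n : ℝ) * σ ^ 2 / m ^ 2 - 2 * (σ / m) * √((n : ℝ) - 1)) * m
      = m + σ ^ 2 / m * n - 2 * (σ * √((n : ℝ) - 1)) := by field_simp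
  linarith

lemma ne_zero_of_threshold {σ : ℝ} (hm : 0 < m) (hmB : m ≤ B)
    (hcond : B / m < 1 + (n : ℝ) * σ ^ 2 / m ^ 2 - 2 * (σ / m) * √((n : ℝ) - 1)) :
    σ ≠ 0 := by
  rintro rfl
  have : 1 ≤ B / m := (one_le_div hm).mpr hmB
  norm_num at hcond
  linarith

end Parameters

section AlmostSure

variable {Ω : Type*} [MeasurableSpace Ω] {ℙ : Measure Ω} [IsFiniteMeasure ℙ]

lemma ae_eventually_notMem_of_summable {E : ℕ → Set Ω} {τ : ℕ → ℝ} (hτ : Summable τ)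
    (h : ∀ᶠ d in atTop, ℙ.real (E d) ≤ τ d) : ∀ᵐ ω ∂ℙ, ∀ᶠ d in atTop, ω ∉ E d := by
  have hsum : Summable fun d => ℙ.real (E d) :=
    Summable.of_norm_bounded_eventually_nat hτ <| h.mono fun d hd => by
      rwa [Real.norm_of_nonneg measureReal_nonneg]
  have htsum := hsum.tsum_ofReal_ne_top
  simp_rw [ofReal_measureReal (measure_ne_top _ _)] at htsum
  exact ae_eventually_notMem htsum

lemma tendsto_measure_of_ae_eventually_mem {S G : ℕ → Set Ω} (hG : ∀ d, MeasurableSet (G d))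
    (hae : ∀ᵐ ω ∂ℙ, ∀ᶠ d in atTop, ω ∈ G d) (hdisj : ∀ᶠ d in atTop, Disjoint (S d) (G d)) :
    Tendsto (fun d => ℙ (S d)) atTop (𝓝 0) := by
  have hcompl : Tendsto (fun d => ℙ (G d)ᶜ) atTop (𝓝 (ℙ ∅)) :=
    tendsto_measure_of_ae_tendsto_indicator_of_isFiniteMeasure atTop MeasurableSet.empty
      (fun d => (hG d).compl) (by simpa using hae)
  rw [measure_empty] at hcompl
  exact tendsto_of_tendsto_of_tendsto_of_le_of_le' tendsto_const_nhds hcompl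
    (Eventually.of_forall fun _ => zero_le)
    (hdisj.mono fun d hd => measure_mono hd.subset_compl_right)

end AlmostSure

section Compressions

variable {n : ℕ} {ζ β m v ε : ℝ}

theorem exists_family_exceedFraction_barrierEdge_le (hn : 0 < n) (hβζ : β < ζ) (hmζ : m < ζ)
    (hm : 0 ≤ m) (hv : 0 ≤ v) (hε : 0 < ε) (hε1 : ε ≤ 1) :
    ∃ τ : ℕ → ℝ, (∀ d, 0 ≤ τ d) ∧ Summable τ ∧ ∀ᶠ d : ℕ in atTop,
      ∃ (I : Type) (_ : Fintype I) (_ : Nonempty I) (J : I → Matrix (Fin n × Fin d) (Fin d) ℂ),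
        (∀ i, (J i)ᴴ * J i = 1) ∧ ∀ X ∈ typicalSet (Fin n × Fin d) β m v ε,
          exceedFraction (barrierEdge n ζ β m v ε) J X ≤ τ d := by
  obtain ⟨τ, hτ0, hτs, hτ⟩ := exists_family_exceedFraction_le_of_summable hn hε hε1
    (stieltjesBound_pos hβζ hmζ hm hv hε.le) (hm.trans_lt hmζ) hβζ
  refine ⟨τ, hτ0, hτs, hτ.mono fun d ⟨I, hI, hI', J, hJ, hbound⟩ => ?_⟩
  have hcard : Fintype.card (Fin (d + (n - 1) * d)) = Fintype.card (Fin n × Fin d) := by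
    rw [Fintype.card_prod, Fintype.card_fin, Fintype.card_fin, Fintype.card_fin,
      ← one_add_mul, add_comm, Nat.sub_one_add_one hn.ne']
  set e : Fin (d + (n - 1) * d) ≃ Fin n × Fin d := Fintype.equivOfCardEq hcard
  set P : Matrix (Fin n × Fin d) (Fin (d + (n - 1) * d)) ℂ :=
    (1 : Matrix (Fin n × Fin d) (Fin n × Fin d) ℂ).submatrix id e
  have hP : Pᴴ * P = 1 := by
    rw [conjTranspose_submatrix, conjTranspose_one,
      ← submatrix_mul _ _ _ _ _ Function.bijective_id, Matrix.one_mul, submatrix_one_equiv]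
  have hP' : P * Pᴴ = 1 := by
    rw [conjTranspose_submatrix, conjTranspose_one, submatrix_mul_equiv, Matrix.one_mul,
      submatrix_id_id]
  refine ⟨I, hI, hI', fun i => P * J i, fun i => ?_, fun X hX => ?_⟩
  · rw [conjTranspose_mul, Matrix.mul_assoc, ← Matrix.mul_assoc Pᴴ, hP, Matrix.one_mul, hJ]
  have hPX := compress_mem_typicalSet hP hP' hX
  have htrace := resolventTrace_le_of_mem_typicalSet hm hβζ hmζ hPX
  rw [hcard, Fintype.card_prod, Fintype.card_fin, Fintype.card_fin, Nat.cast_mul] at htrace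
  simpa only [exceedFraction, compress_mul, barrierEdge] using hbound _ hPX.1 hPX.2.1 htrace

theorem ae_eventually_compress_notMem_exceedSet {Ω : Type*} [MeasurableSpace Ω] {ℙ : Measure Ω}
    [IsProbabilityMeasure ℙ] {X : (d : ℕ) → Ω → Matrix (Fin n × Fin d) (Fin n × Fin d) ℂ}
    (hX : ∀ d, Measurable (X d)) (hinv : UnitInv ℙ n X) (hn : 0 < n) (hβζ : β < ζ) (hmζ : m < ζ)
    (hm : 0 ≤ m) (hv : 0 ≤ v) (hε : 0 < ε) (hε1 : ε ≤ 1)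
    {K : (d : ℕ) → Matrix (Fin n × Fin d) (Fin d) ℂ} (hK : ∀ d, (K d)ᴴ * K d = 1) :
    ∀ᵐ ω ∂ℙ, ∀ᶠ d in atTop, X d ω ∈ typicalSet (Fin n × Fin d) β m v ε →
      compress (K d) (X d ω) ∉ exceedSet (Fin d) (barrierEdge n ζ β m v ε) := by
  obtain ⟨τ, hτ0, hτs, hτ⟩ :=
    exists_family_exceedFraction_barrierEdge_le hn hβζ hmζ hm hv hε hε1
  have hmeasure : ∀ᶠ d in atTop, ℙ.real {ω | X d ω ∈ typicalSet (Fin n × Fin d) β m v ε ∧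
      compress (K d) (X d ω) ∈ exceedSet (Fin d) (barrierEdge n ζ β m v ε)} ≤ τ d :=
    hτ.mono fun d ⟨I, _, _, J, hJ, hbound⟩ => measureReal_compress_mem_le (hX d) (hinv d)
      measurableSet_typicalSet
      (fun U hU _ => compress_mem_typicalSet (Unitary.star_mul_self_of_mem hU)
        (Unitary.mul_star_self_of_mem hU))
      hJ (hK d) (hτ0 d) hbound
  filter_upwards [ae_eventually_notMem_of_summable hτs hmeasure] with ω hω
  exact hω.mono fun d hd htypical hexceed => hd ⟨htypical, hexceed⟩

end Compressions

section ControlledSet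

variable {n : ℕ} {d : ℕ} {F : Set (EuclideanSpace ℂ (Fin n))} {β m v ε c : ℝ}

/-- The typical matrices on `ℂⁿ ⊗ ℂᵈ` whose compressions to the subspaces `a ⊗ ℂᵈ`, `a ∈ F`, have
spectrum in `(-∞, c]`. -/
def controlledSet (d : ℕ) (F : Set (EuclideanSpace ℂ (Fin n))) (β m v ε c : ℝ) :
    Set (Matrix (Fin n × Fin d) (Fin n × Fin d) ℂ) :=
  {X | X ∈ typicalSet (Fin n × Fin d) β m v ε ∧
    ∀ a ∈ F, compress (tensorLeft (Fin d) a) X ∉ exceedSet (Fin d) c}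

lemma measurableSet_controlledSet (hF : F.Finite) :
    MeasurableSet (controlledSet d F β m v ε c) := by
  have hinter : controlledSet d F β m v ε c = typicalSet (Fin n × Fin d) β m v ε ∩
      ⋂ a ∈ F, compress (tensorLeft (Fin d) a) ⁻¹' (exceedSet (Fin d) c)ᶜ := by
    ext X
    simp [controlledSet]
  rw [hinter]
  exact measurableSet_typicalSet.inter <|
    hF.measurableSet_biInter fun _ _ => measurable_compress _ (measurableSet_exceedSet c).compl

lemma disjoint_SEP_controlledSet (hn : 0 < n) (hd : 0 < d) (hε : 0 < ε) (hβ : 0 ≤ β)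
    (hεv : ε < m ^ 2 + v) (hlt : ((1 + ε) * c + (ε ^ 2 + ε) * β) * (m + ε) < m ^ 2 + v - ε)
    (hF : Metric.sphere 0 1 ⊆ ⋃ x ∈ F, Metric.ball x ε) :
    Disjoint (SEP n d) (controlledSet d F β m v ε c) :=
  Set.disjoint_right.mpr fun _ hX => notMem_SEP_of_mem_typicalSet hn hd hε hβ hεv hlt hF hX.1 hX.2

theorem ae_eventually_mem_controlledSet {Ω : Type*} [MeasurableSpace Ω] {ℙ : Measure Ω}
    [IsProbabilityMeasure ℙ] {X : (d : ℕ) → Ω → Matrix (Fin n × Fin d) (Fin n × Fin d) ℂ}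
    (hX : ∀ d, Measurable (X d)) (hinv : UnitInv ℙ n X) (hn : 0 < n) {ζ : ℝ} (hβζ : β < ζ)
    (hmζ : m < ζ) (hm : 0 ≤ m) (hv : 0 ≤ v) (hε : 0 < ε) (hε1 : ε ≤ 1) (hF : F.Finite)
    (hFs : F ⊆ Metric.sphere 0 1)
    (htypical : ∀ᵐ ω ∂ℙ, ∀ᶠ d in atTop, X d ω ∈ typicalSet (Fin n × Fin d) β m v ε) :
    ∀ᵐ ω ∂ℙ, ∀ᶠ d in atTop, X d ω ∈ controlledSet d F β m v ε (barrierEdge n ζ β m v ε) := by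
  have hunit : ∀ a ∈ F, star (a : Fin n → ℂ) ⬝ᵥ (a : Fin n → ℂ) = 1 := fun a ha => by
    have hnorm : ‖a‖ = 1 := by simpa using hFs ha
    rw [star_dotProduct_self, WithLp.toLp_ofLp, hnorm, one_pow, Complex.ofReal_one]
  have hcompress := (ae_ball_iff hF.countable).mpr fun a ha =>
    ae_eventually_compress_notMem_exceedSet hX hinv hn hβζ hmζ hm hv hε hε1
      (K := fun d => tensorLeft (Fin d) a) fun _ => conjTranspose_tensorLeft_mul_self (hunit a ha)
  filter_upwards [htypical, hcompress] with ω hω hωF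
  filter_upwards [hω, hF.eventually_all.mpr hωF] with d hd hdF
  exact ⟨hd, fun a ha => hdF a ha hd⟩

end ControlledSet

/-- If `B/m < 1 + nσ²/m² − 2(σ/m)√(n−1)`, a unitarily invariant
strongly convergent sequence of random PSD matrices is asymptotically entangled. -/
theorem stmt3
    {Ω : Type*} [MeasurableSpace Ω] (ℙ : Measure Ω) [IsProbabilityMeasure ℙ]
    (n : ℕ) (hn : 2 ≤ n)
    (X : (d : ℕ) → Ω → Matrix (Fin n × Fin d) (Fin n × Fin d) ℂ)
    (hmeas : ∀ d, Measurable (X d))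
    (hpsd : ∀ d ω, (X d ω).PosSemidef)
    (hUI : UnitInv ℙ n X)
    (μ : Measure ℝ) [IsProbabilityMeasure μ]
    (A B m σ : ℝ) (hA : 0 ≤ A) (hσ : 0 ≤ σ) (hm : 0 < m)
    (hsupp : msupport μ ⊆ Set.Icc A B)
    (hmean : (∫ x, x ∂μ) = m)
    (hvar : (∫ x, x ^ 2 ∂μ) - m ^ 2 = σ ^ 2)
    (hconv : StrongConv ℙ n X μ)
    (hcond : B / m < 1 + (n : ℝ) * σ ^ 2 / m ^ 2 - 2 * (σ / m) * Real.sqrt ((n : ℝ) - 1)) :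
    (∀ᵐ ω ∂ℙ, ∀ᶠ d : ℕ in atTop, X d ω ∉ SEP n d) ∧
      Tendsto (fun d : ℕ => ℙ {ω | X d ω ∈ SEP n d}) atTop (𝓝 0) := by
  have hn0 : 0 < n := by omega
  have hn1 : (0 : ℝ) < (n : ℝ) - 1 := sub_pos.mpr (by exact_mod_cast hn)
  obtain ⟨hmS, hSB⟩ := hconv.le_of_msupport_subset hn0 hpsd hA hm hsupp hmean
  have hmB : m ≤ B := hmS.trans hSB
  have hσ0 : 0 < σ := hσ.lt_of_ne' (ne_zero_of_threshold hm hmB hcond)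
  set s := σ * √((n : ℝ) - 1) with hs
  have hs0 : 0 < s := mul_pos hσ0 (Real.sqrt_pos.mpr hn1)
  have hs2 : s ^ 2 = σ ^ 2 * ((n : ℝ) - 1) := by rw [hs, mul_pow, Real.sq_sqrt hn1.le]
  obtain ⟨ε, hε, hε1, hεs, hεv, hlt⟩ :=
    exists_slack hn0 hm hmB hs0 (by positivity) hs2 (div_lt_sq_div_of_threshold hn0 hm hcond)
  obtain ⟨F, hFs, hFfin, hF⟩ :=
    (isCompact_sphere (0 : EuclideanSpace ℂ (Fin n)) 1).finite_cover_balls hε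
  have hgood := ae_eventually_mem_controlledSet hmeas hUI hn0 (ζ := B + s) (β := B + ε)
    (by linarith) (by linarith) hm.le (sq_nonneg σ) hε hε1 hFfin hFs
    (hconv.ae_eventually_mem_typicalSet hn0 hpsd hmean (by linarith) hε (by linarith))
  have hdisj := (eventually_gt_atTop 0).mono fun d hd =>
    disjoint_SEP_controlledSet hn0 hd hε (by linarith) hεv hlt hF
  constructor
  · filter_upwards [hgood] with ω hω
    filter_upwards [hω, hdisj] with d hd hdisj_d
    exact hdisj_d.notMem_of_mem_right hd
  · exact tendsto_measure_of_ae_eventually_mem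
      (fun d => hmeas d (measurableSet_controlledSet hFfin)) hgood
      (hdisj.mono fun d hd => hd.preimage (X d))
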